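/- arXiv:1511.04564 — 4 statements merged into one kernel-verified Lean document; each statement's English description precedes it below -/
import Mathlib

section
/- Let n ∈ ℕ^d have pairwise relatively prime entries and let P : [−1,1]^d → ℂ be a d-variate polynomial function such that ⟨P, T_γ⟩ = 0 for all γ ∈ ℕ_0^d \ {0} for which there exists h ∈ ℕ_0^d with γ_i = h_i·n_i for all i and Σ_{i=1}^d h_i even. Then (1/π^d)·∫_{[−1,1]^d} P(x)·∏_{j=1}^d (1−x_j²)^{−1/2} dx = Σ_{i ∈ I^{(n)}} w^{(n)}_i·P(z^{(n)}_i). -/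
/-! The quadrature rule is checked on the Chebyshev basis. Every polynomial function is a finite
linear combination `∑ c_γ T_γ` (`mem_span_TprodC`), and the `T_γ` are orthogonal for the Chebyshev
weight, so the normalized integral of `P` is `c_0` and the hypothesis on `P` says that `c_γ = 0` for
every nonzero `γ = (h_j n_j)_j` with `∑ h_j` even.

The quadrature sum factorizes: over `I_r` the weighted sum of `T_γ` is `1 / (2 p[n])` times the
product over `j` of the one-dimensional sums `∑_{k ≤ m, k ≡ r (mod 2)} ε_k cos (γ_j k π / m)`, where
`m = n_j` and `ε_k` is `2` in the interior and `1` at the endpoints. Such a sum is a trapezoidal sum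
restricted to one parity class, and it equals `(-1) ^ (r h) m` if `γ_j = h m` and `0` if `m ∤ γ_j`
(`parity_sum_dvd`, `parity_sum_not_dvd`). Adding the contributions of `r = 0` and `r = 1`, the
quadrature sum of `T_γ` is `1` if `γ = (h_j n_j)_j` with `∑ h_j` even, and `0` otherwise
(`quad_TprodC_of`, `quad_TprodC_of_not`). Hence the quadrature sum of `P` is also `c_0`. -/

open Real Set

/-- p[n] = ∏_{j=1}^d n_j. -/
def Pp {d : ℕ} (n : Fin d → ℕ) : ℕ := ∏ j, n j

/-- p_i[n] = ∏_{j ≠ i} n_j. -/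
def Pc {d : ℕ} (n : Fin d → ℕ) (i : Fin d) : ℕ := ∏ j ∈ Finset.univ.erase i, n j

/-- t^{(n)}_l = lπ/p[n]. -/
noncomputable def tn {d : ℕ} (n : Fin d → ℕ) (l : ℤ) : ℝ := (l : ℝ) * Real.pi / (Pp n : ℝ)

/-- t^{(2n)}_l = lπ/(2p[n]). -/
noncomputable def t2n {d : ℕ} (n : Fin d → ℕ) (l : ℤ) : ℝ :=
  (l : ℝ) * Real.pi / (2 * (Pp n : ℝ))

/-- The Lissajous curve ℓ^{(2n)}_{κ,u}. -/
noncomputable def lc2 {d : ℕ} (n : Fin d → ℕ) (κ : Fin d → ℤ) (u : Fin d → ℝ) (t : ℝ) :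
    Fin d → ℝ :=
  fun j => u j * Real.cos ((Pc n j : ℝ) * t - (κ j : ℝ) * Real.pi / (2 * (n j : ℝ)))

/-- The Lissajous curve ℓ^{(n)}_{κ,u}. -/
noncomputable def lc1 {d : ℕ} (n : Fin d → ℕ) (κ : Fin d → ℤ) (u : Fin d → ℝ) (t : ℝ) :
    Fin d → ℝ :=
  fun j => u j * Real.cos ((Pc n j : ℝ) * t - (κ j : ℝ) * Real.pi / (n j : ℝ))

/-- The index class I^{(n)}_r: 0 ≤ i_j ≤ n_j with i_j ≡ r (mod 2). -/
def IsetR {d : ℕ} (n : Fin d → ℕ) (r : ℕ) : Set (Fin d → ℕ) :=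
  {i | ∀ j, i j ≤ n j ∧ i j % 2 = r % 2}

/-- The index set I^{(n)} = I^{(n)}_0 ∪ I^{(n)}_1. -/
def Iset {d : ℕ} (n : Fin d → ℕ) : Set (Fin d → ℕ) := IsetR n 0 ∪ IsetR n 1

/-- The subclass I^{(n)}_{M,r}: indices in I^{(n)}_r with 0 < i_j < n_j exactly for j ∈ M. -/
def IsetMR {d : ℕ} (n : Fin d → ℕ) (M : Finset (Fin d)) (r : ℕ) : Set (Fin d → ℕ) :=
  {i ∈ IsetR n r | ∀ j, (0 < i j ∧ i j < n j) ↔ j ∈ M}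

/-- I^{(n)}_M = I^{(n)}_{M,0} ∪ I^{(n)}_{M,1}. -/
def IsetM {d : ℕ} (n : Fin d → ℕ) (M : Finset (Fin d)) : Set (Fin d → ℕ) :=
  IsetMR n M 0 ∪ IsetMR n M 1

/-- Chebyshev–Gauß–Lobatto point z^{(m)}_i = cos(iπ/m). -/
noncomputable def zpt (m i : ℕ) : ℝ := Real.cos ((i : ℝ) * Real.pi / (m : ℝ))

/-- The multivariate point z^{(n)}_i. -/
noncomputable def zv {d : ℕ} (n : Fin d → ℕ) (i : Fin d → ℕ) : Fin d → ℝ :=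
  fun j => zpt (n j) (i j)

/-- The set M(i) = {j : 0 < i_j < n_j}. -/
def Mset {d : ℕ} (n : Fin d → ℕ) (i : Fin d → ℕ) : Finset (Fin d) :=
  Finset.univ.filter (fun j => 0 < i j ∧ i j < n j)

/-- The weight w^{(n)}_i = 2^{#M(i)}/(2p[n]). -/
noncomputable def wt {d : ℕ} (n : Fin d → ℕ) (i : Fin d → ℕ) : ℝ :=
  (2 : ℝ) ^ (Mset n i).card / (2 * (Pp n : ℝ))

/-- The function χ^{(n)}_γ(i) = ∏_j cos(γ_j i_j π / n_j). -/
noncomputable def chi {d : ℕ} (n : Fin d → ℕ) (γ : Fin d → ℕ) (i : Fin d → ℕ) : ℝ :=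
  ∏ j, Real.cos ((γ j : ℝ) * (i j : ℝ) * Real.pi / (n j : ℝ))

/-- The Chebyshev polynomial of the first kind, as a function: T_m(cos θ) = cos(mθ). -/
noncomputable def Tch (m : ℕ) (x : ℝ) : ℝ := (Polynomial.Chebyshev.T ℝ (m : ℤ)).eval x

/-- The multivariate Chebyshev polynomial T_γ(x) = ∏_j T_{γ_j}(x_j), complex-valued. -/
noncomputable def TprodC {d : ℕ} (γ : Fin d → ℕ) (x : Fin d → ℝ) : ℂ :=
  ((∏ j, Tch (γ j) (x j) : ℝ) : ℂ)

open MeasureTheory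

/-- The product Chebyshev weight w_d(x) = ∏_j (1 − x_j²)^{−1/2}. -/
noncomputable def wch {d : ℕ} (x : Fin d → ℝ) : ℝ :=
  ∏ j, (Real.sqrt (1 - (x j) ^ 2))⁻¹

/-- The normalized inner product ⟨f,g⟩ = π^{−d} ∫_{[−1,1]^d} f(x) conj(g(x)) w_d(x) dx. -/
noncomputable def innP {d : ℕ} (f g : (Fin d → ℝ) → ℂ) : ℂ :=
  ((1 / Real.pi ^ d : ℝ) : ℂ) *
    ∫ x in Set.Icc (-1 : Fin d → ℝ) 1, f x * (starRingEnd ℂ) (g x) * ((wch x : ℝ) : ℂ)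

/-! ### Expansion in the Chebyshev basis -/

lemma TprodC_update {d : ℕ} (γ : Fin d → ℕ) (i : Fin d) (m : ℕ) (x : Fin d → ℝ) :
    TprodC (Function.update γ i m) x =
      (Tch m (x i) : ℂ) * ((∏ j ∈ Finset.univ.erase i, Tch (γ j) (x j) : ℝ) : ℂ) := by
  unfold TprodC
  rw [← Finset.mul_prod_erase Finset.univ _ (Finset.mem_univ i)]
  push_cast
  congr 1
  · simp
  · refine Finset.prod_congr rfl fun j hj => ?_
    rw [Function.update_of_ne (Finset.ne_of_mem_erase hj)]

lemma mul_Tch_succ (m : ℕ) (t : ℝ) :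
    t * Tch (m + 1) t = 1 / 2 * Tch (m + 2) t + 1 / 2 * Tch m t := by
  unfold Tch
  have := Polynomial.Chebyshev.T_add_two ℝ m
  push_cast
  rw [this]
  simp
  ring

/-- The span of the `T_γ` is stable under multiplication by a coordinate, by the three-term
recurrence. -/
lemma coord_mul_mem_span {d : ℕ} (i : Fin d) {f : (Fin d → ℝ) → ℂ}
    (hf : f ∈ Submodule.span ℂ (Set.range (TprodC (d := d)))) :
    (fun x => f x * (x i : ℂ)) ∈ Submodule.span ℂ (Set.range (TprodC (d := d))) := by
  induction hf using Submodule.span_induction with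
  | mem f hf =>
    obtain ⟨γ, rfl⟩ := hf
    have hγ : ∀ x, TprodC γ x =
        (Tch (γ i) (x i) : ℂ) * ((∏ j ∈ Finset.univ.erase i, Tch (γ j) (x j) : ℝ) : ℂ) := by
      intro x
      rw [← TprodC_update, Function.update_eq_self]
    rcases h : γ i with _ | m
    · have : (fun x => TprodC γ x * (x i : ℂ)) = TprodC (Function.update γ i 1) := by
        funext x
        rw [TprodC_update, hγ, h]
        simp [Tch]
        ring
      rw [this]
      exact Submodule.subset_span ⟨_, rfl⟩
    · have : (fun x => TprodC γ x * (x i : ℂ)) =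
          (1 / 2 : ℂ) • TprodC (Function.update γ i (m + 2)) +
            (1 / 2 : ℂ) • TprodC (Function.update γ i m) := by
        funext x
        have h2 : ((x i * Tch (m + 1) (x i) : ℝ) : ℂ) =
          ((1 / 2 * Tch (m + 2) (x i) + 1 / 2 * Tch m (x i) : ℝ) : ℂ) := by rw [mul_Tch_succ]
        push_cast at h2
        simp only [Pi.add_apply, Pi.smul_apply, smul_eq_mul, TprodC_update, hγ x, h]
        linear_combination
          ((∏ j ∈ Finset.univ.erase i, Tch (γ j) (x j) : ℝ) : ℂ) * h2
      rw [this]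
      exact Submodule.add_mem _ (Submodule.smul_mem _ _ (Submodule.subset_span ⟨_, rfl⟩))
        (Submodule.smul_mem _ _ (Submodule.subset_span ⟨_, rfl⟩))
  | zero =>
    convert! Submodule.zero_mem (Submodule.span ℂ (Set.range (TprodC (d := d)))) using 1
    funext x
    simp
  | add f g _ _ hf hg =>
    convert! Submodule.add_mem _ hf hg using 1
    funext x
    simp [add_mul]
  | smul a f _ hf =>
    convert! Submodule.smul_mem _ a hf using 1
    funext x
    simp [mul_assoc]

lemma mem_span_TprodC {d : ℕ} (p : MvPolynomial (Fin d) ℂ) :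
    (fun x : Fin d → ℝ => MvPolynomial.eval (fun j => ((x j : ℝ) : ℂ)) p) ∈
      Submodule.span ℂ (Set.range (TprodC (d := d))) := by
  induction p using MvPolynomial.induction_on with
  | C a =>
    have : (fun x : Fin d → ℝ => MvPolynomial.eval (fun j => ((x j : ℝ) : ℂ))
        (MvPolynomial.C a)) = a • TprodC (0 : Fin d → ℕ) := by
      funext x
      simp [TprodC, Tch]
    rw [this]
    exact Submodule.smul_mem _ _ (Submodule.subset_span ⟨_, rfl⟩)
  | add p q hp hq =>
    convert! Submodule.add_mem _ hp hq using 1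
    funext x
    simp
  | mul_X p i hp =>
    convert! coord_mul_mem_span i hp using 1
    funext x
    simp

/-! ### Orthogonality -/

lemma integral_Tch (a b : ℕ) :
    ∫ t in Set.Icc (-1 : ℝ) 1, Tch a t * Tch b t * (√(1 - t ^ 2))⁻¹ =
      ∫ t, (Polynomial.Chebyshev.T ℝ a).eval t * (Polynomial.Chebyshev.T ℝ b).eval t
        ∂Polynomial.Chebyshev.measureT := by
  rw [Polynomial.Chebyshev.integral_measureT, intervalIntegral.integral_of_le (by norm_num),
    MeasureTheory.integral_Icc_eq_integral_Ioc]
  simp [Tch]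

lemma integrableOn_Tch (a b : ℕ) :
    Integrable (fun t => Tch a t * Tch b t * (√(1 - t ^ 2))⁻¹)
      (volume.restrict (Set.Icc (-1 : ℝ) 1)) := by
  have h := Polynomial.Chebyshev.intervalIntegrable_sqrt_one_sub_sq_inv.continuousOn_mul
    (g := fun t => Tch a t * Tch b t) (by unfold Tch; fun_prop)
  rw [intervalIntegrable_iff, Set.uIoc_of_le (by norm_num), ← integrableOn_Icc_iff_integrableOn_Ioc]
    at h
  simpa [IntegrableOn] using h

lemma restrict_Icc_eq_pi (d : ℕ) :
    (volume.restrict (Set.Icc (-1 : Fin d → ℝ) 1)) =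
      Measure.pi (fun _ : Fin d => volume.restrict (Set.Icc (-1 : ℝ) 1)) := by
  rw [← Measure.restrict_pi_pi, ← volume_pi]
  congr 1
  exact (Set.pi_univ_Icc _ _).symm

lemma TprodC_mul_eq {d : ℕ} (γ γ' : Fin d → ℕ) (x : Fin d → ℝ) :
    TprodC γ x * (starRingEnd ℂ) (TprodC γ' x) * ((wch x : ℝ) : ℂ) =
      ((∏ j, (Tch (γ j) (x j) * Tch (γ' j) (x j) * (√(1 - (x j) ^ 2))⁻¹) : ℝ) : ℂ) := by
  unfold TprodC wch
  rw [Complex.conj_ofReal]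
  simp only [Finset.prod_mul_distrib]
  push_cast
  rfl

lemma integrable_TprodC_mul {d : ℕ} (γ γ' : Fin d → ℕ) :
    Integrable (fun x => TprodC γ x * (starRingEnd ℂ) (TprodC γ' x) * ((wch x : ℝ) : ℂ))
      (volume.restrict (Set.Icc (-1 : Fin d → ℝ) 1)) := by
  simp only [TprodC_mul_eq]
  rw [restrict_Icc_eq_pi]
  exact (Integrable.fintype_prod
    (f := fun j t => Tch (γ j) t * Tch (γ' j) t * (√(1 - t ^ 2))⁻¹)
    fun j => integrableOn_Tch (γ j) (γ' j)).ofReal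

lemma innP_TprodC {d : ℕ} (γ γ' : Fin d → ℕ) :
    innP (TprodC γ) (TprodC γ') = ((1 / π ^ d *
      ∏ j, ∫ t, (Polynomial.Chebyshev.T ℝ (γ j)).eval t * (Polynomial.Chebyshev.T ℝ (γ' j)).eval t
        ∂Polynomial.Chebyshev.measureT : ℝ) : ℂ) := by
  unfold innP
  simp only [TprodC_mul_eq]
  rw [restrict_Icc_eq_pi, integral_complex_ofReal, integral_fintype_prod_eq_prod
    (f := fun j t => Tch (γ j) t * Tch (γ' j) t * (√(1 - t ^ 2))⁻¹), Complex.ofReal_mul]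
  simp only [integral_Tch]

lemma innP_TprodC_of_ne {d : ℕ} {γ γ' : Fin d → ℕ} (h : γ ≠ γ') :
    innP (TprodC γ) (TprodC γ') = 0 := by
  obtain ⟨j, hj⟩ := Function.ne_iff.mp h
  rw [innP_TprodC, Finset.prod_eq_zero (Finset.mem_univ j)
    (Polynomial.Chebyshev.integral_eval_T_real_mul_eval_T_real_measureT_of_ne hj)]
  simp

lemma innP_TprodC_self_ne_zero {d : ℕ} (γ : Fin d → ℕ) :
    innP (TprodC γ) (TprodC γ) ≠ 0 := by
  rw [innP_TprodC, Complex.ofReal_ne_zero]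
  refine mul_ne_zero (by positivity) (Finset.prod_ne_zero_iff.mpr fun j _ => ?_)
  by_cases h : γ j = 0
  · rw [h, Nat.cast_zero, Polynomial.Chebyshev.integral_eval_T_real_mul_self_measureT_zero]
    positivity
  · rw [Polynomial.Chebyshev.integral_T_real_mul_self_measureT_of_ne_zero h]
    positivity

lemma innP_TprodC_zero (d : ℕ) :
    innP (TprodC (0 : Fin d → ℕ)) (TprodC 0) = 1 := by
  rw [innP_TprodC]
  simp only [Pi.zero_apply, Nat.cast_zero,
    Polynomial.Chebyshev.integral_eval_T_real_mul_self_measureT_zero, Finset.prod_const,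
    Finset.card_univ, Fintype.card_fin]
  norm_cast
  field_simp

/-- Pairing a Chebyshev expansion with `T_γ` isolates the coefficient `c γ`. -/
lemma innP_sum {d : ℕ} (c : (Fin d → ℕ) →₀ ℂ) (γ : Fin d → ℕ) :
    innP (c.sum fun β a => a • TprodC β) (TprodC γ) = c γ * innP (TprodC γ) (TprodC γ) := by
  have h1 : innP (c.sum fun β a => a • TprodC β) (TprodC γ) =
      ∑ β ∈ c.support, c β * innP (TprodC β) (TprodC γ) := by
    unfold innP
    simp only [Finsupp.sum, Finset.sum_apply, Pi.smul_apply, smul_eq_mul, Finset.sum_mul]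
    rw [integral_finsetSum _ fun β _ => ?_, Finset.mul_sum]
    · refine Finset.sum_congr rfl fun β _ => ?_
      simp only [mul_assoc, integral_const_mul]
      ring
    · simpa only [mul_assoc] using (integrable_TprodC_mul β γ).const_mul (c β)
  rw [h1, Finset.sum_eq_single γ]
  · intro β _ hβ
    rw [innP_TprodC_of_ne hβ, mul_zero]
  · intro h
    rw [Finsupp.notMem_support_iff.mp h, zero_mul]

/-! ### One-dimensional trapezoidal sums -/

/-- The weight `ε_k`: `2` for `0 < k < m` and `1` otherwise. -/
noncomputable def eps (m k : ℕ) : ℝ := if 0 < k ∧ k < m then 2 else 1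

lemma sum_eps_mul (m : ℕ) (hm : 0 < m) (f : ℕ → ℝ) :
    ∑ k ∈ Finset.range (m + 1), eps m k * f k = ∑ k ∈ Finset.range m, (f k + f (k + 1)) := by
  obtain ⟨m, rfl⟩ : ∃ l, m = l + 1 := ⟨m - 1, by omega⟩
  have h : ∀ k ∈ Finset.range m, eps (m + 1) (k + 1) * f (k + 1) = 2 * f (k + 1) := by
    intro k hk
    rw [Finset.mem_range] at hk
    simp [eps, hk]
  rw [Finset.sum_range_succ, Finset.sum_range_succ', Finset.sum_congr rfl h,
    Finset.sum_add_distrib, Finset.sum_range_succ' f, Finset.sum_range_succ (fun k => f (k + 1)),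
    ← Finset.mul_sum]
  simp [eps]
  ring

lemma trapezoid_dvd (m g : ℕ) (hm : 0 < m) (h : 2 * m ∣ g) :
    ∑ k ∈ Finset.range (m + 1), eps m k * cos (g * k * π / m) = 2 * m := by
  obtain ⟨h, rfl⟩ := h
  have hc : ∀ k : ℕ, cos ((2 * m * h : ℕ) * k * π / m) = 1 := by
    intro k
    have : ((2 * m * h : ℕ) : ℝ) * k * π / m = (h * k : ℕ) * (2 * π) := by
      push_cast
      field_simp
    rw [this, Real.cos_nat_mul_two_pi]
  rw [sum_eps_mul m hm (fun k => cos ((2 * m * h : ℕ) * k * π / m))]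
  simp only [hc]
  simp
  ring

/-- Multiplied by `sin (θ / 2)`, where `θ = g π / m`, the trapezoidal sum telescopes to
`cos (θ / 2) * sin (m θ) = 0`. -/
lemma trapezoid_not_dvd (m g : ℕ) (hm : 0 < m) (h : ¬ 2 * m ∣ g) :
    ∑ k ∈ Finset.range (m + 1), eps m k * cos (g * k * π / m) = 0 := by
  rw [sum_eps_mul m hm (fun k => cos (g * k * π / m))]
  set θ : ℝ := g * π / m with hθ
  have hk : ∀ k : ℕ, (g : ℝ) * k * π / m = k * θ := fun k => by rw [hθ]; ring
  have hs : sin (θ / 2) ≠ 0 := by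
    intro h0
    obtain ⟨k, hk⟩ := Real.sin_eq_zero_iff.mp h0
    apply h
    have hm' : (m : ℝ) ≠ 0 := by positivity
    have : (g : ℝ) = 2 * m * k := by
      have h1 : (k : ℝ) * π * (2 * m) = g * π := by
        rw [hk, hθ]
        field_simp
      have := Real.pi_ne_zero
      apply mul_right_cancel₀ this
      linarith
    have h2 : (g : ℤ) = (2 * m : ℕ) * k := by
      push_cast
      exact_mod_cast this
    exact Int.natCast_dvd_natCast.mp ⟨k, h2⟩
  apply (mul_eq_zero.mp _).resolve_left hs
  have key : ∀ k : ℕ, sin (θ / 2) * (cos (k * θ) + cos ((k + 1 : ℕ) * θ)) =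
      cos (θ / 2) * sin ((k + 1 : ℕ) * θ) - cos (θ / 2) * sin (k * θ) := by
    intro k
    have e1 : ((k + 1 : ℕ) : ℝ) * θ = k * θ + 2 * (θ / 2) := by push_cast; ring
    rw [e1, Real.cos_add, Real.sin_add, Real.cos_two_mul, Real.sin_two_mul]
    have := Real.sin_sq_add_cos_sq (θ / 2)
    linear_combination (-2 * cos (θ / 2) * sin (k * θ)) * this
  simp only [hk]
  rw [Finset.mul_sum, Finset.sum_congr rfl fun k _ => key k,
    Finset.sum_range_sub (fun k : ℕ => cos (θ / 2) * sin (k * θ))]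
  have : (m : ℝ) * θ = g * π := by rw [hθ]; field_simp
  simp [this]

/-- The trapezoidal sum over one parity class. As `(-1) ^ k cos (g k π / m) = cos ((g + m) k π / m)`,
it is a combination of two full trapezoidal sums. -/
lemma parity_sum (m g r : ℕ) (hm : 0 < m) :
    ∑ k ∈ (Finset.range (m + 1)).filter (fun k => k % 2 = r % 2),
        eps m k * cos (g * k * π / m) =
      (∑ k ∈ Finset.range (m + 1), eps m k * cos (g * k * π / m) +
        (-1) ^ r * ∑ k ∈ Finset.range (m + 1), eps m k * cos ((g + m : ℕ) * k * π / m)) / 2 := by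
  rw [Finset.sum_filter, Finset.mul_sum, ← Finset.sum_add_distrib, Finset.sum_div]
  refine Finset.sum_congr rfl fun k _ => ?_
  have h1 : ((g + m : ℕ) : ℝ) * k * π / m = g * k * π / m + k * π := by
    push_cast
    field_simp
  rw [h1, Real.cos_add_nat_mul_pi]
  have h2 : (-1 : ℝ) ^ r * (-1) ^ k = if k % 2 = r % 2 then 1 else -1 := by
    rw [← pow_add]
    split_ifs with h
    · exact Even.neg_one_pow (Nat.even_iff.mpr (by omega))
    · exact Odd.neg_one_pow (Nat.odd_iff.mpr (by omega))
  have h3 : eps m k * cos (g * k * π / m) + (-1) ^ r * (eps m k * ((-1) ^ k * cos (g * k * π / m)))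
      = eps m k * cos (g * k * π / m) * (1 + (-1 : ℝ) ^ r * (-1) ^ k) := by ring
  rw [h3, h2]
  split_ifs <;> ring

lemma parity_sum_dvd (m h r : ℕ) (hm : 0 < m) :
    ∑ k ∈ (Finset.range (m + 1)).filter (fun k => k % 2 = r % 2),
        eps m k * cos ((h * m : ℕ) * k * π / m) = (-1) ^ (r * h) * m := by
  rw [parity_sum m _ r hm]
  rcases Nat.even_or_odd' h with ⟨l, rfl | rfl⟩
  · rw [trapezoid_dvd m _ hm ⟨l, by ring⟩, trapezoid_not_dvd m _ hm]
    · have : (-1 : ℝ) ^ (r * (2 * l)) = 1 := Even.neg_one_pow ⟨r * l, by ring⟩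
      rw [this]
      ring
    · rintro ⟨q, hq⟩
      have : m * (2 * l + 1) = m * (2 * q) := by linarith
      have := Nat.eq_of_mul_eq_mul_left hm this
      omega
  · rw [trapezoid_dvd m ((2 * l + 1) * m + m) hm ⟨l + 1, by ring⟩, trapezoid_not_dvd m _ hm]
    · have : (-1 : ℝ) ^ (r * (2 * l + 1)) = (-1) ^ r := by
        have e : r * (2 * l + 1) = 2 * (r * l) + r := by ring
        rw [e, pow_add, pow_mul]
        simp
      rw [this]
      ring
    · rintro ⟨q, hq⟩
      have : m * (2 * l + 1) = m * (2 * q) := by linarith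
      have := Nat.eq_of_mul_eq_mul_left hm this
      omega

lemma parity_sum_not_dvd (m g r : ℕ) (hm : 0 < m) (h : ¬ m ∣ g) :
    ∑ k ∈ (Finset.range (m + 1)).filter (fun k => k % 2 = r % 2),
        eps m k * cos (g * k * π / m) = 0 := by
  rw [parity_sum m _ r hm, trapezoid_not_dvd m _ hm fun h' => h ((Dvd.intro_left 2 rfl).trans h'),
    trapezoid_not_dvd m _ hm fun h' =>
      h ((Nat.dvd_add_left (dvd_refl m)).mp ((Dvd.intro_left 2 rfl).trans h'))]
  simp

/-! ### The quadrature sum of a Chebyshev polynomial -/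

/-- `I^{(n)}_r` as a finset, in product form. -/
def IFin {d : ℕ} (n : Fin d → ℕ) (r : ℕ) : Finset (Fin d → ℕ) :=
  Fintype.piFinset fun j => (Finset.range (n j + 1)).filter (fun k => k % 2 = r % 2)

lemma coe_IFin {d : ℕ} (n : Fin d → ℕ) (r : ℕ) : (IFin n r : Set (Fin d → ℕ)) = IsetR n r := by
  ext i
  simp [IFin, IsetR]

lemma disjoint_IFin {d : ℕ} (hd : 0 < d) (n : Fin d → ℕ) :
    Disjoint (IFin n 0) (IFin n 1) := by
  rw [Finset.disjoint_left]
  intro i h0 h1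
  simp only [IFin, Fintype.mem_piFinset, Finset.mem_filter] at h0 h1
  have := (h0 ⟨0, hd⟩).2
  have := (h1 ⟨0, hd⟩).2
  omega

lemma finsum_Iset {d : ℕ} (hd : 0 < d) (n : Fin d → ℕ) (f : (Fin d → ℕ) → ℂ) :
    ∑ᶠ i ∈ Iset n, f i = ∑ i ∈ IFin n 0 ∪ IFin n 1, f i := by
  rw [← finsum_mem_coe_finset, Finset.coe_union, coe_IFin, coe_IFin]
  rfl

lemma wt_eq {d : ℕ} (n i : Fin d → ℕ) :
    wt n i = 1 / (2 * (Pp n : ℝ)) * ∏ j, eps (n j) (i j) := by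
  have : ∏ j, eps (n j) (i j) = 2 ^ (Mset n i).card := by
    simp [eps, Finset.prod_ite, Mset]
  rw [wt, this]
  ring

lemma sum_IFin_TprodC {d : ℕ} (n γ : Fin d → ℕ) (r : ℕ) :
    ∑ i ∈ IFin n r, (wt n i : ℂ) * TprodC γ (zv n i) =
      ((1 / (2 * (Pp n : ℝ)) * ∏ j,
        ∑ k ∈ (Finset.range (n j + 1)).filter (fun k => k % 2 = r % 2),
          eps (n j) k * cos (γ j * k * π / n j) : ℝ) : ℂ) := by
  rw [Finset.prod_univ_sum, Finset.mul_sum, Complex.ofReal_sum]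
  refine Finset.sum_congr rfl fun i _ => ?_
  rw [TprodC, ← Complex.ofReal_mul, wt_eq, mul_assoc, ← Finset.prod_mul_distrib]
  congr 2
  refine Finset.prod_congr rfl fun j _ => ?_
  rw [Tch, zv, zpt, Polynomial.Chebyshev.T_real_cos]
  congr 2
  push_cast
  ring

lemma sum_IFin_TprodC_mul {d : ℕ} (n : Fin d → ℕ) (hn : ∀ j, 0 < n j) (γ h : Fin d → ℕ)
    (hγ : ∀ j, γ j = h j * n j) (r : ℕ) :
    ∑ i ∈ IFin n r, (wt n i : ℂ) * TprodC γ (zv n i) = (-1) ^ (r * ∑ j, h j) / 2 := by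
  have hp : (Pp n : ℝ) ≠ 0 := by
    rw [Pp]
    exact_mod_cast (Finset.prod_pos fun j _ => hn j).ne'
  rw [sum_IFin_TprodC]
  simp only [hγ, parity_sum_dvd _ _ _ (hn _), Finset.prod_mul_distrib]
  rw [Finset.prod_pow_eq_pow_sum, ← Finset.mul_sum]
  have : ∏ j, (n j : ℝ) = Pp n := by simp [Pp]
  rw [this]
  have : 1 / (2 * (Pp n : ℝ)) * ((-1) ^ (r * ∑ j, h j) * (Pp n : ℝ)) =
    (-1) ^ (r * ∑ j, h j) / 2 := by field_simp
  rw [this]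
  push_cast
  rfl

lemma quad_TprodC_of {d : ℕ} (n : Fin d → ℕ) (hd : 0 < d) (hn : ∀ j, 0 < n j) (γ : Fin d → ℕ)
    (h : ∃ h : Fin d → ℕ, (∀ i, γ i = h i * n i) ∧ Even (∑ i, h i)) :
    ∑ i ∈ IFin n 0 ∪ IFin n 1, (wt n i : ℂ) * TprodC γ (zv n i) = 1 := by
  obtain ⟨h, hγ, he⟩ := h
  rw [Finset.sum_union (disjoint_IFin hd n), sum_IFin_TprodC_mul n hn γ h hγ,
    sum_IFin_TprodC_mul n hn γ h hγ, one_mul, he.neg_one_pow]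
  norm_num

lemma quad_TprodC_of_not {d : ℕ} (n : Fin d → ℕ) (hd : 0 < d) (hn : ∀ j, 0 < n j)
    (γ : Fin d → ℕ)
    (h : ¬ ∃ h : Fin d → ℕ, (∀ i, γ i = h i * n i) ∧ Even (∑ i, h i)) :
    ∑ i ∈ IFin n 0 ∪ IFin n 1, (wt n i : ℂ) * TprodC γ (zv n i) = 0 := by
  rw [Finset.sum_union (disjoint_IFin hd n)]
  by_cases hdvd : ∀ j, n j ∣ γ j
  · choose q hq using hdvd
    have hγ : ∀ j, γ j = q j * n j := fun j => by rw [hq j, mul_comm]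
    have ho : Odd (∑ j, q j) := by
      rw [← Nat.not_even_iff_odd]
      exact fun he => h ⟨q, hγ, he⟩
    rw [sum_IFin_TprodC_mul n hn γ q hγ, sum_IFin_TprodC_mul n hn γ q hγ, one_mul, ho.neg_one_pow]
    norm_num
  · push Not at hdvd
    obtain ⟨j, hj⟩ := hdvd
    have hz : ∀ r, ∑ i ∈ IFin n r, (wt n i : ℂ) * TprodC γ (zv n i) = 0 := by
      intro r
      rw [sum_IFin_TprodC, Finset.prod_eq_zero (Finset.mem_univ j)
        (parity_sum_not_dvd _ _ r (hn j) hj)]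
      simp
    rw [hz, hz, add_zero]

/-! ### The quadrature rule -/

/-- Theorem 2.8: the quadrature rule. If the polynomial P is orthogonal to all T_γ with
γ ≠ 0 of the form γ_i = h_i n_i, Σ h_i even, then the normalized Chebyshev-weighted
integral of P equals the weighted sum of its values at the nodes z^{(n)}_i, i ∈ I^{(n)}. -/
theorem stmt_13 {d : ℕ} (hd : 0 < d) (n : Fin d → ℕ) (hn : ∀ j, 0 < n j)
    (hcop : ∀ i j, i ≠ j → Nat.Coprime (n i) (n j))
    (P : (Fin d → ℝ) → ℂ)
    (hP : ∃ p : MvPolynomial (Fin d) ℂ,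
      ∀ x : Fin d → ℝ, P x = MvPolynomial.eval (fun j => ((x j : ℝ) : ℂ)) p)
    (horth : ∀ γ : Fin d → ℕ, γ ≠ 0 →
      (∃ h : Fin d → ℕ, (∀ i, γ i = h i * n i) ∧ Even (∑ i, h i)) →
      innP P (TprodC γ) = 0) :
    ((1 / Real.pi ^ d : ℝ) : ℂ) *
        (∫ x in Set.Icc (-1 : Fin d → ℝ) 1, P x * ((wch x : ℝ) : ℂ)) =
      ∑ᶠ i ∈ Iset n, ((wt n i : ℝ) : ℂ) * P (zv n i) := by
  obtain ⟨p, hp⟩ := hP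
  have hmem := mem_span_TprodC p
  rw [← funext hp, Finsupp.mem_span_range_iff_exists_finsupp] at hmem
  obtain ⟨c, rfl⟩ := hmem
  have hc : ∀ γ : Fin d → ℕ, γ ≠ 0 →
      (∃ h : Fin d → ℕ, (∀ i, γ i = h i * n i) ∧ Even (∑ i, h i)) → c γ = 0 := by
    intro γ h0 hγ
    have := horth γ h0 hγ
    rw [innP_sum] at this
    exact (mul_eq_zero.mp this).resolve_right (innP_TprodC_self_ne_zero γ)
  -- Both sides equal `c 0`; the left one is the pairing with `T_0 = 1`.
  trans c 0
  · have h := innP_sum c 0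
    rw [innP_TprodC_zero, mul_one] at h
    rw [← h]
    have h1 : ∀ x : Fin d → ℝ, TprodC (0 : Fin d → ℕ) x = 1 := fun x => by simp [TprodC, Tch]
    simp only [innP, h1, map_one, mul_one]
  · rw [finsum_Iset hd]
    simp only [Finsupp.sum, Finset.sum_apply, Pi.smul_apply, smul_eq_mul, Finset.mul_sum]
    rw [Finset.sum_comm]
    have hswap : ∀ γ ∈ c.support, ∑ i ∈ IFin n 0 ∪ IFin n 1,
        (wt n i : ℂ) * (c γ * TprodC γ (zv n i)) =
        c γ * ∑ i ∈ IFin n 0 ∪ IFin n 1, (wt n i : ℂ) * TprodC γ (zv n i) := by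
      intro γ _
      rw [Finset.mul_sum]
      exact Finset.sum_congr rfl fun i _ => by ring
    rw [Finset.sum_congr rfl hswap, Finset.sum_eq_single (0 : Fin d → ℕ)]
    · rw [quad_TprodC_of n hd hn 0 ⟨0, by simp, by simp⟩, mul_one]
    · intro γ _ h0
      by_cases hγ : ∃ h : Fin d → ℕ, (∀ i, γ i = h i * n i) ∧ Even (∑ i, h i)
      · rw [hc γ h0 hγ, zero_mul]
      · rw [quad_TprodC_of_not n hd hn γ hγ, mul_zero]
    · intro h
      rw [Finsupp.notMem_support_iff.mp h, zero_mul]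
end

section
/- Let n ∈ ℕ^d have pairwise relatively prime entries, κ ∈ ℤ^d, and let g ∈ {1,…,d} be such that n_i is odd for all i ∈ {1,…,d} \ {g}. Set H^{(2n)} = {0,…,4p[n]−1} × {0,1}^{d−1}. (a) For every (l, ρ_1,…,ρ_{g−1},ρ_{g+1},…,ρ_d) ∈ H^{(2n)} there exists a uniquely determined i ∈ I^{(2n)}_κ and a (not necessarily unique) v ∈ {−1,1}^d such that i_g ≡ v_g·(l − κ_g) (mod 4n_g) and i_j ≡ v_j·(l + 2ρ_j·n_j − κ_j) (mod 4n_j) for all j ≠ g; this defines a map i^{(2n)}_κ : H^{(2n)} → I^{(2n)}_κ. (b) i^{(2n)}_κ(l, ρ) ∈ I^{(2n)}_{κ,r} if and only if l ≡ r (mod 2). (c) For M ⊆ {1,…,d} and i ∈ I^{(2n)}_{κ,M}, the fiber {h ∈ H^{(2n)} : i^{(2n)}_κ(h) = i} has exactly 2^{#M} elements. -/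
/-!
Each coordinate of `Rel2` says that `i j` is, up to sign, congruent to
`a j = l + 2 ρ_j n_j - κ_j` modulo `4 n_j` (with `ρ_g = 0`). The interval `[0, 2 n_j]` is a
fundamental domain for `x ↦ -x` on `ℤ / 4 n_j`, so `i j` exists and is unique (`fold_exists`,
`fold_unique`); since `4 n_j` is even, `i j ≡ l - κ_j` modulo 2, which gives the parity statement.

For the fibre over `i`, fix signs `v`. The congruences become
`l + 2 ρ_j n_j ≡ v_j i_j + κ_j` modulo `4 n_j`, where all right-hand sides have the same parity.
Because `n_j` is odd for `j ≠ g`, they determine `l` modulo `4 n_g` and modulo the other `n_j`,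
hence modulo `4 p[n]` by the Chinese remainder theorem, and then each `ρ_j` is forced
(`existsUnique_of_residues`). Two sign vectors give the same residues exactly when they agree
on `M`, because `-i_j ≡ i_j` modulo `4 n_j` iff `i_j ∈ {0, 2 n_j}`. So the fibre is in bijection
with the subsets of `M`, a subset recording where the sign is `-1`.
-/

open Real Set

/-- The index class I^{(2n)}_{κ,r}: 0 ≤ i_j ≤ 2n_j with i_j ≡ κ_j + r (mod 2). -/
def I2R {d : ℕ} (n : Fin d → ℕ) (κ : Fin d → ℤ) (r : ℕ) : Set (Fin d → ℕ) :=
  {i | ∀ j, i j ≤ 2 * n j ∧ (i j : ℤ) ≡ κ j + (r : ℤ) [ZMOD 2]}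

/-- I^{(2n)}_κ = I^{(2n)}_{κ,0} ∪ I^{(2n)}_{κ,1}. -/
def I2 {d : ℕ} (n : Fin d → ℕ) (κ : Fin d → ℤ) : Set (Fin d → ℕ) :=
  I2R n κ 0 ∪ I2R n κ 1

/-- The subclass I^{(2n)}_{κ,M,r}: indices in I^{(2n)}_{κ,r} with 0 < i_j < 2n_j exactly
for j ∈ M. -/
def I2MR {d : ℕ} (n : Fin d → ℕ) (κ : Fin d → ℤ) (M : Finset (Fin d)) (r : ℕ) :
    Set (Fin d → ℕ) :=
  {i ∈ I2R n κ r | ∀ j, (0 < i j ∧ i j < 2 * n j) ↔ j ∈ M}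

/-- I^{(2n)}_{κ,M} = I^{(2n)}_{κ,M,0} ∪ I^{(2n)}_{κ,M,1}. -/
def I2M {d : ℕ} (n : Fin d → ℕ) (κ : Fin d → ℤ) (M : Finset (Fin d)) : Set (Fin d → ℕ) :=
  I2MR n κ M 0 ∪ I2MR n κ M 1

/-- The defining relation for the map i^{(2n)}_κ : H^{(2n)} → I^{(2n)}_κ:
i_g ≡ v_g(l − κ_g) (mod 4n_g) and i_j ≡ v_j(l + 2ρ_j n_j − κ_j) (mod 4n_j) for j ≠ g,
for some choice of signs v. -/
def Rel2 {d : ℕ} (n : Fin d → ℕ) (κ : Fin d → ℤ) (g : Fin d) (l : ℕ) (ρ : Fin d → ℕ)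
    (i : Fin d → ℕ) : Prop :=
  ∃ v : Fin d → ℤ, (∀ j, v j = 1 ∨ v j = -1) ∧
    ((i g : ℤ) ≡ v g * ((l : ℤ) - κ g) [ZMOD (4 * (n g : ℤ))]) ∧
    ∀ j, j ≠ g → (i j : ℤ) ≡ v j * ((l : ℤ) + 2 * (ρ j : ℤ) * (n j : ℤ) - κ j)
      [ZMOD (4 * (n j : ℤ))]

/-! ### Folding `ℤ / 4n` onto `[0, 2n]` -/

theorem fold_exists (n : ℕ) (hn : 0 < n) (a : ℤ) :
    ∃ i : ℕ, i ≤ 2 * n ∧ ∃ v : ℤ, (v = 1 ∨ v = -1) ∧ (i : ℤ) ≡ v * a [ZMOD (4 * (n : ℤ))] := by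
  have h0 := Int.emod_nonneg a (show (4 * (n : ℤ)) ≠ 0 by omega)
  have h1 := Int.emod_lt_of_pos a (show 0 < (4 * (n : ℤ)) by omega)
  have h2 : a % (4 * (n : ℤ)) ≡ a [ZMOD (4 * (n : ℤ))] := Int.mod_modEq _ _
  by_cases h : a % (4 * (n : ℤ)) ≤ 2 * n
  · refine ⟨(a % (4 * (n : ℤ))).toNat, by omega, 1, Or.inl rfl, ?_⟩
    rw [Int.toNat_of_nonneg h0, one_mul]
    exact h2
  · refine ⟨(4 * (n : ℤ) - a % (4 * (n : ℤ))).toNat, by omega, -1, Or.inr rfl, ?_⟩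
    rw [Int.toNat_of_nonneg (by omega)]
    have h3 := (Int.ModEq.refl (n := 4 * (n : ℤ)) (4 * (n : ℤ))).sub h2
    refine h3.trans ?_
    rw [Int.modEq_iff_dvd]
    exact ⟨-1, by ring⟩

theorem fold_unique (n i k : ℕ) (hi : i ≤ 2 * n) (hk : k ≤ 2 * n) (a v w : ℤ)
    (hv : v = 1 ∨ v = -1) (hw : w = 1 ∨ w = -1)
    (h1 : (i : ℤ) ≡ v * a [ZMOD (4 * (n : ℤ))]) (h2 : (k : ℤ) ≡ w * a [ZMOD (4 * (n : ℤ))]) :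
    i = k := by
  have key : (4 * (n : ℤ)) ∣ ((i : ℤ) - k) ∨ (4 * (n : ℤ)) ∣ ((i : ℤ) + k) := by
    obtain ⟨c, hc⟩ := h1.dvd
    obtain ⟨e, he⟩ := h2.dvd
    rcases hv with rfl | rfl <;> rcases hw with rfl | rfl
    · exact Or.inl ⟨e - c, by linear_combination he - hc⟩
    · exact Or.inr ⟨-c - e, by linear_combination -hc - he⟩
    · exact Or.inr ⟨-c - e, by linear_combination -hc - he⟩
    · exact Or.inl ⟨e - c, by linear_combination he - hc⟩
  rcases key with h | h
  · have hz : (i : ℤ) - k = 0 := by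
      rcases Nat.eq_zero_or_pos n with hn | hn
      · omega
      · exact Int.eq_zero_of_abs_lt_dvd h (by rw [abs_lt]; constructor <;> omega)
    omega
  -- Here `0 ≤ i + k ≤ 4 n` is a multiple of `4 n`, which leaves `i = k = 0` and `i = k = 2 n`.
  · obtain ⟨c, hc⟩ := h
    rcases Nat.eq_zero_or_pos n with hn | hn
    · omega
    · have c1 : c < 2 := by
        by_contra hcc
        have : (4 * (n : ℤ)) * 2 ≤ 4 * (n : ℤ) * c := by gcongr; omega
        omega
      have c0 : -1 < c := by
        by_contra hcc
        have : (4 * (n : ℤ)) * c ≤ 4 * (n : ℤ) * (-1) := by gcongr; omega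
        omega
      interval_cases c <;> omega

/-- A form of `Rel2` that treats the coordinate `g` like the others, which `ρ g = 0` allows. -/
theorem rel2_iff {d : ℕ} (n : Fin d → ℕ) (κ : Fin d → ℤ) (g : Fin d) (l : ℕ) (ρ : Fin d → ℕ)
    (i : Fin d → ℕ) (h0 : ρ g = 0) :
    Rel2 n κ g l ρ i ↔ ∀ j, ∃ v : ℤ, (v = 1 ∨ v = -1) ∧
      (i j : ℤ) ≡ v * ((l : ℤ) + 2 * (ρ j : ℤ) * (n j : ℤ) - κ j) [ZMOD (4 * (n j : ℤ))] := by
  constructor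
  · rintro ⟨v, hv, hg, hj⟩ j
    refine ⟨v j, hv j, ?_⟩
    by_cases h : j = g
    · subst h
      simpa [h0] using hg
    · exact hj j h
  · intro h
    choose v hv hj using h
    refine ⟨v, hv, ?_, fun j _ => hj j⟩
    simpa [h0] using hj g

theorem parity_of_sign_modEq (n i : ℕ) (l r κ v : ℤ) (hv : v = 1 ∨ v = -1)
    (h : (i : ℤ) ≡ v * (l + 2 * r * (n : ℤ) - κ) [ZMOD (4 * (n : ℤ))]) :
    (i : ℤ) ≡ κ + l [ZMOD 2] := by
  have h2 := (h.of_mul_right (n : ℤ)).of_dvd (show (2 : ℤ) ∣ 4 by norm_num)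
  refine h2.trans (Int.modEq_iff_dvd.2 ?_)
  rcases hv with rfl | rfl
  · exact ⟨κ - r * n, by ring⟩
  · exact ⟨l + r * n, by ring⟩

/-! ### The Chinese remainder theorem on `H^{(2n)}` -/

/-- The elements of `H^{(2n)}` are encoded by pairs `(l, ρ)` with `ρ g = 0`. -/
def hIdx {d : ℕ} (n : Fin d → ℕ) (g : Fin d) : Set (ℕ × (Fin d → ℕ)) :=
  {p | p.1 < 4 * Pp n ∧ p.2 g = 0 ∧ ∀ j, j ≠ g → p.2 j ≤ 1}

/-- The pairwise coprime moduli `4 n_g` and `n_j` for `j ≠ g`, with product `4 p[n]`. -/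
def crtMod {d : ℕ} (n : Fin d → ℕ) (g : Fin d) (j : Fin d) : ℕ := if j = g then 4 * n j else n j

theorem prod_crtMod {d : ℕ} (n : Fin d → ℕ) (g : Fin d) : ∏ j, crtMod n g j = 4 * Pp n := by
  have : ∀ j, crtMod n g j = (if j = g then 4 else 1) * n j := by
    intro j; unfold crtMod; split_ifs <;> simp
  simp_rw [this, Finset.prod_mul_distrib]
  simp [Pp]

theorem coprime_crtMod {d : ℕ} (n : Fin d → ℕ) (g : Fin d)
    (hcop : ∀ i j, i ≠ j → Nat.Coprime (n i) (n j)) (hg : ∀ j, j ≠ g → Odd (n j))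
    (i j : Fin d) (hij : i ≠ j) : Nat.Coprime (crtMod n g i) (crtMod n g j) := by
  have h4 : ∀ k, k ≠ g → Nat.Coprime 4 (n k) := fun k hk =>
    Nat.Coprime.pow_left 2 (Nat.coprime_two_left.2 (hg k hk))
  unfold crtMod
  split_ifs with h1 h2 h2
  · exact absurd (h1.trans h2.symm) hij
  · exact (h4 j h2).mul_left (hcop i j hij)
  · exact ((h4 i h1).symm).mul_right (hcop i j hij)
  · exact hcop i j hij

/-- Chinese remainder theorem for `H^{(2n)}`: residues `b j` modulo `4 n_j` of a common parity
are realised by exactly one pair `(l, ρ)`. -/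
theorem existsUnique_of_residues {d : ℕ} (n : Fin d → ℕ) (hn : ∀ j, 0 < n j)
    (hcop : ∀ i j, i ≠ j → Nat.Coprime (n i) (n j)) (g : Fin d) (hg : ∀ j, j ≠ g → Odd (n j))
    (b : Fin d → ℤ) (hb : ∀ j, b j ≡ b g [ZMOD 2]) :
    ∃! p : ℕ × (Fin d → ℕ), p ∈ hIdx n g ∧
      ∀ j, (p.1 : ℤ) + 2 * (p.2 j : ℤ) * (n j : ℤ) ≡ b j [ZMOD (4 * (n j : ℤ))] := by
  have hm0 : ∀ j, crtMod n g j ≠ 0 := by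
    intro j; have := hn j; unfold crtMod; split_ifs <;> omega
  have hpp : Set.Pairwise (↑(Finset.univ : Finset (Fin d)))
      (Function.onFun Nat.Coprime (crtMod n g)) :=
    fun i _ j _ hij => coprime_crtMod n g hcop hg i j hij
  refine existsUnique_of_exists_of_unique ?_ ?_
  · let a : Fin d → ℕ := fun j => (b j % (crtMod n g j : ℤ)).toNat
    obtain ⟨l, hl⟩ : ∃ l : ℕ, l = (Nat.chineseRemainderOfFinset a (crtMod n g) Finset.univ
      (fun i _ => hm0 i) hpp : ℕ) := ⟨_, rfl⟩
    have hlt : l < 4 * Pp n := by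
      rw [hl, ← prod_crtMod n g]
      exact Nat.chineseRemainderOfFinset_lt_prod a (crtMod n g) (fun i _ => hm0 i) hpp
    have hlm : ∀ j, (l : ℤ) ≡ b j [ZMOD (crtMod n g j : ℤ)] := by
      intro j
      have h1 := (Nat.chineseRemainderOfFinset a (crtMod n g) Finset.univ
        (fun i _ => hm0 i) hpp).2 j (Finset.mem_univ j)
      rw [← hl] at h1
      have h2 := Int.natCast_modEq_iff.2 h1
      have h3 : ((a j : ℕ) : ℤ) = b j % (crtMod n g j : ℤ) :=
        Int.toNat_of_nonneg (Int.emod_nonneg _ (by exact_mod_cast hm0 j))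
      rw [h3] at h2
      exact h2.trans (Int.mod_modEq _ _)
    have hlg : (l : ℤ) ≡ b g [ZMOD (4 * (n g : ℤ))] := by
      have := hlm g
      simpa [crtMod] using this
    have hl2 : (l : ℤ) ≡ b g [ZMOD 2] :=
      (hlg.of_mul_right (n g : ℤ)).of_dvd (show (2 : ℤ) ∣ 4 by norm_num)
    have hex : ∀ j, ∃ r : ℕ, r ≤ 1 ∧ (j = g → r = 0) ∧
        (l : ℤ) + 2 * (r : ℤ) * (n j : ℤ) ≡ b j [ZMOD (4 * (n j : ℤ))] := by
      intro j
      by_cases hjg : j = g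
      · subst hjg
        exact ⟨0, by omega, fun _ => rfl, by simpa using hlg⟩
      · have h1 : (n j : ℤ) ∣ b j - l := by
          have := hlm j
          simp only [crtMod, if_neg hjg] at this
          exact this.dvd
        have h2 : (2 : ℤ) ∣ b j - l := (hl2.trans (hb j).symm).dvd
        have hco : IsCoprime (2 : ℤ) (n j : ℤ) := by
          have := Nat.isCoprime_iff_coprime.2 (Nat.coprime_two_left.2 (hg j hjg))
          simpa using this
        -- `b j - l` is a multiple of `2 n_j`; the parity of the quotient is `ρ_j`.
        obtain ⟨c, hc⟩ := hco.mul_dvd h2 h1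
        rcases Int.even_or_odd' c with ⟨k, hk | hk⟩
        · refine ⟨0, by omega, fun _ => rfl, Int.modEq_iff_dvd.2 ⟨k, ?_⟩⟩
          rw [hk] at hc
          push_cast
          linear_combination hc
        · refine ⟨1, le_rfl, fun h => absurd h hjg, Int.modEq_iff_dvd.2 ⟨k, ?_⟩⟩
          rw [hk] at hc
          push_cast
          linear_combination hc
    choose ρ h1 h2 h3 using hex
    exact ⟨(l, ρ), ⟨hlt, h2 g rfl, fun j _ => h1 j⟩, h3⟩
  · rintro ⟨l, ρ⟩ ⟨l', ρ'⟩ ⟨⟨hl, h0, h1⟩, h⟩ ⟨⟨hl', h0', h1'⟩, h'⟩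
    simp only at hl h0 h1 h hl' h0' h1' h'
    have hd : ∀ j, (4 * (n j : ℤ)) ∣
        ((l' : ℤ) + 2 * (ρ' j : ℤ) * (n j : ℤ)) - ((l : ℤ) + 2 * (ρ j : ℤ) * (n j : ℤ)) :=
      fun j => ((h j).trans (h' j).symm).dvd
    have hdvd : ∀ j, (crtMod n g j : ℤ) ∣ (l' : ℤ) - l := by
      intro j
      unfold crtMod
      split_ifs with hj
      · have := hd j
        rw [hj, h0, h0'] at this
        rw [hj]
        simpa using this
      · obtain ⟨c, hc⟩ := hd j
        exact ⟨4 * c - 2 * ρ' j + 2 * ρ j, by linear_combination hc⟩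
    have hP : ((4 * Pp n : ℕ) : ℤ) ∣ (l' : ℤ) - l := by
      rw [← prod_crtMod n g, Nat.cast_prod]
      refine Finset.prod_dvd_of_coprime ?_ (fun j _ => hdvd j)
      intro i _ j _ hij
      exact Nat.isCoprime_iff_coprime.2 (coprime_crtMod n g hcop hg i j hij)
    have hz : (l' : ℤ) - l = 0 :=
      Int.eq_zero_of_abs_lt_dvd hP (by rw [abs_lt]; constructor <;> omega)
    have hll : l = l' := by omega
    have hρ : ρ = ρ' := by
      funext j
      by_cases hj : j = g
      · rw [hj, h0, h0']
      · have a1 := h1 j hj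
        have a2 := h1' j hj
        obtain ⟨c, hc⟩ := hd j
        have hnj : (n j : ℤ) ≠ 0 := by have := hn j; omega
        have e : (ρ' j : ℤ) - ρ j = 2 * c := by
          apply mul_left_cancel₀ (mul_ne_zero (two_ne_zero (α := ℤ)) hnj)
          linear_combination hc - hz
        omega
    rw [hll, hρ]

/-! ### Fibres and sign vectors -/

/-- The sign vector that is `-1` exactly on `S`. -/
def sgnOn {d : ℕ} (S : Finset (Fin d)) (j : Fin d) : ℤ := if j ∈ S then -1 else 1

theorem sgnOn_eq {d : ℕ} (S : Finset (Fin d)) (j : Fin d) : sgnOn S j = 1 ∨ sgnOn S j = -1 := by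
  unfold sgnOn; split_ifs <;> simp

theorem modEq_sign_mul_iff (m i a κ v : ℤ) (hv : v = 1 ∨ v = -1) :
    i ≡ v * (a - κ) [ZMOD m] ↔ a ≡ v * i + κ [ZMOD m] := by
  rw [Int.modEq_iff_dvd, Int.modEq_iff_dvd]
  rcases hv with rfl | rfl
  · rw [← dvd_neg]; ring_nf
  · ring_nf

/-- The fibre count for an index `i` whose coordinates satisfy the parity condition with a common
`r`: subsets `S` of `M` correspond to the points of the fibre reached with signs `sgnOn S`. -/
theorem ncard_fiber {d : ℕ} (n : Fin d → ℕ) (hn : ∀ j, 0 < n j)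
    (hcop : ∀ i j, i ≠ j → Nat.Coprime (n i) (n j)) (κ : Fin d → ℤ) (g : Fin d)
    (hg : ∀ j, j ≠ g → Odd (n j)) (M : Finset (Fin d)) (i : Fin d → ℕ) (r : ℤ)
    (hle : ∀ j, i j ≤ 2 * n j) (hpar : ∀ j, (i j : ℤ) ≡ κ j + r [ZMOD 2])
    (hM : ∀ j, (0 < i j ∧ i j < 2 * n j) ↔ j ∈ M) :
    {p : ℕ × (Fin d → ℕ) | p.1 < 4 * Pp n ∧ p.2 g = 0 ∧ (∀ j, j ≠ g → p.2 j ≤ 1) ∧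
        Rel2 n κ g p.1 p.2 i}.ncard = 2 ^ M.card := by
  have hbpar : ∀ (S : Finset (Fin d)) j, sgnOn S j * i j + κ j ≡ r [ZMOD 2] := by
    intro S j
    obtain ⟨c, hc⟩ := (hpar j).dvd
    rw [Int.modEq_iff_dvd]
    rcases sgnOn_eq S j with h | h <;> rw [h]
    · exact ⟨c - κ j, by linear_combination hc⟩
    · exact ⟨c + i j - κ j, by linear_combination hc⟩
  choose f hf hfu using fun S : Finset (Fin d) => existsUnique_of_residues n hn hcop g hg
    (fun j => sgnOn S j * i j + κ j) (fun j => (hbpar S j).trans (hbpar S g).symm)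
  simp only at hf hfu
  have himg : {p : ℕ × (Fin d → ℕ) | p.1 < 4 * Pp n ∧ p.2 g = 0 ∧ (∀ j, j ≠ g → p.2 j ≤ 1) ∧
      Rel2 n κ g p.1 p.2 i} = f '' (M.powerset : Set (Finset (Fin d))) := by
    ext p
    constructor
    · rintro ⟨h1, h2, h3, h4⟩
      rw [rel2_iff _ _ _ _ _ _ h2] at h4
      choose v hv hj using h4
      refine ⟨M.filter (fun j => v j = -1),
        Finset.mem_coe.2 (Finset.mem_powerset.2 (Finset.filter_subset _ _)), ?_⟩
      refine (hfu _ p ⟨⟨h1, h2, h3⟩, fun j => ?_⟩).symm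
      have h5 := (modEq_sign_mul_iff _ _ _ _ _ (hv j)).1 (hj j)
      refine h5.trans (Int.ModEq.add_right _ ?_)
      by_cases hjM : j ∈ M
      · have : sgnOn (M.filter (fun j => v j = -1)) j = v j := by
          rcases hv j with h | h <;> simp [sgnOn, hjM, h]
        rw [this]
      -- Outside `M`, `i j` is `0` or `2 n_j`, so its sign does not matter modulo `4 n_j`.
      · have : sgnOn (M.filter (fun j => v j = -1)) j = 1 := by simp [sgnOn, hjM]
        rw [this]
        have h6 : i j = 0 ∨ i j = 2 * n j := by
          have := hle j
          rw [← hM j] at hjM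
          omega
        rcases hv j with h | h
        · rw [h]
        · rw [h, Int.modEq_iff_dvd]
          rcases h6 with h6 | h6 <;> rw [h6]
          · simp
          · exact ⟨1, by push_cast; ring⟩
    · rintro ⟨S, -, rfl⟩
      obtain ⟨⟨h1, h2, h3⟩, h4⟩ := hf S
      refine ⟨h1, h2, h3, (rel2_iff _ _ _ _ _ _ h2).2 fun j => ⟨sgnOn S j, sgnOn_eq S j, ?_⟩⟩
      exact (modEq_sign_mul_iff _ _ _ _ _ (sgnOn_eq S j)).2 (h4 j)
  have hno : ∀ j ∈ M, ∀ e : ℤ, (e = 1 ∨ e = -1) →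
      ¬ (4 * (n j : ℤ)) ∣ e * (2 * (i j : ℤ)) := by
    intro j hj e he hdv
    have h := (hM j).2 hj
    have h7 : (4 * (n j : ℤ)) ∣ 2 * (i j : ℤ) := by
      rcases he with rfl | rfl
      · simpa using hdv
      · simpa using hdv
    have := Int.le_of_dvd (by omega) h7
    omega
  have hinj : Set.InjOn f (M.powerset : Set (Finset (Fin d))) := by
    intro S hS T hT hST
    have hS' := Finset.mem_powerset.1 (Finset.mem_coe.1 hS)
    have hT' := Finset.mem_powerset.1 (Finset.mem_coe.1 hT)
    have hdv : ∀ j, (4 * (n j : ℤ)) ∣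
        (sgnOn T j * i j + κ j) - (sgnOn S j * i j + κ j) := by
      intro j
      have h1 := (hf S).2 j
      rw [hST] at h1
      exact (h1.symm.trans ((hf T).2 j)).dvd
    ext j
    constructor
    · intro hj
      by_contra hjT
      refine hno j (hS' hj) 1 (Or.inl rfl) ?_
      have := hdv j
      simp only [sgnOn, if_pos hj, if_neg hjT] at this
      convert this using 1
      ring
    · intro hj
      by_contra hjS
      refine hno j (hT' hj) (-1) (Or.inr rfl) ?_
      have := hdv j
      simp only [sgnOn, if_pos hj, if_neg hjS] at this
      convert this using 1
      ring
  rw [himg, hinj.ncard_image, Set.ncard_coe_finset, Finset.card_powerset]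

/-- Proposition 3.1: a) every element of H^{(2n)} = {0,…,4p[n]−1} × {0,1}^{d−1}
determines a unique i ∈ I^{(2n)}_κ; b) i^{(2n)}_κ(l,ρ) ∈ I^{(2n)}_{κ,r} iff l ≡ r (mod 2);
c) for i ∈ I^{(2n)}_{κ,M} the fiber over i has 2^{#M} elements. -/
theorem stmt_14 {d : ℕ} (hd : 0 < d) (n : Fin d → ℕ) (hn : ∀ j, 0 < n j)
    (hcop : ∀ i j, i ≠ j → Nat.Coprime (n i) (n j))
    (κ : Fin d → ℤ) (g : Fin d) (hg : ∀ j, j ≠ g → Odd (n j)) :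
    (∀ l : ℕ, l < 4 * Pp n → ∀ ρ : Fin d → ℕ, ρ g = 0 → (∀ j, j ≠ g → ρ j ≤ 1) →
      ∃! i : Fin d → ℕ, i ∈ I2 n κ ∧ Rel2 n κ g l ρ i) ∧
    (∀ l : ℕ, l < 4 * Pp n → ∀ ρ : Fin d → ℕ, ρ g = 0 → (∀ j, j ≠ g → ρ j ≤ 1) →
      ∀ i ∈ I2 n κ, Rel2 n κ g l ρ i →
        ∀ r : ℕ, r ≤ 1 → (i ∈ I2R n κ r ↔ l % 2 = r)) ∧
    (∀ M : Finset (Fin d), ∀ i ∈ I2M n κ M,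
      {p : ℕ × (Fin d → ℕ) | p.1 < 4 * Pp n ∧ p.2 g = 0 ∧ (∀ j, j ≠ g → p.2 j ≤ 1) ∧
        Rel2 n κ g p.1 p.2 i}.ncard = 2 ^ M.card) := by
  have hpar : ∀ (l : ℕ) (ρ i : Fin d → ℕ), ρ g = 0 → Rel2 n κ g l ρ i →
      ∀ j, (i j : ℤ) ≡ κ j + l [ZMOD 2] := by
    intro l ρ i h0 h j
    obtain ⟨v, hv, hj⟩ := (rel2_iff _ _ _ _ _ _ h0).1 h j
    exact parity_of_sign_modEq _ _ _ _ _ _ hv hj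
  refine ⟨?_, ?_, ?_⟩
  · intro l _ ρ h0 _
    refine existsUnique_of_exists_of_unique ?_ ?_
    · choose i hi hv using fun j => fold_exists (n j) (hn j)
        ((l : ℤ) + 2 * (ρ j : ℤ) * (n j : ℤ) - κ j)
      have hrel : Rel2 n κ g l ρ i := (rel2_iff _ _ _ _ _ _ h0).2 hv
      refine ⟨i, ?_, hrel⟩
      rcases Nat.even_or_odd' l with ⟨k, hk | hk⟩
      · refine Or.inl fun j => ⟨hi j, (hpar l ρ i h0 hrel j).trans ?_⟩
        exact Int.modEq_iff_dvd.2 ⟨-k, by rw [hk]; push_cast; ring⟩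
      · refine Or.inr fun j => ⟨hi j, (hpar l ρ i h0 hrel j).trans ?_⟩
        exact Int.modEq_iff_dvd.2 ⟨-k, by rw [hk]; push_cast; ring⟩
    · rintro i k ⟨hi, hi'⟩ ⟨hk, hk'⟩
      funext j
      obtain ⟨v, hv, h1⟩ := (rel2_iff _ _ _ _ _ _ h0).1 hi' j
      obtain ⟨w, hw, h2⟩ := (rel2_iff _ _ _ _ _ _ h0).1 hk' j
      have hi2 : i j ≤ 2 * n j := hi.elim (fun h => (h j).1) (fun h => (h j).1)
      have hk2 : k j ≤ 2 * n j := hk.elim (fun h => (h j).1) (fun h => (h j).1)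
      exact fold_unique (n j) _ _ hi2 hk2 _ v w hv hw h1 h2
  · intro l _ ρ h0 _ i hi hrel r hr
    have hi2 : ∀ j, i j ≤ 2 * n j := fun j => hi.elim (fun h => (h j).1) (fun h => (h j).1)
    have hp := hpar l ρ i h0 hrel
    constructor
    · intro h
      have h1 := (h g).2
      have h2 := hp g
      unfold Int.ModEq at h1 h2
      omega
    · intro h j
      refine ⟨hi2 j, ?_⟩
      have h2 := hp j
      unfold Int.ModEq at h2 ⊢
      omega
  · rintro M i (h | h)
    · exact ncard_fiber n hn hcop κ g hg M i _ (fun j => (h.1 j).1) (fun j => (h.1 j).2) h.2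
    · exact ncard_fiber n hn hcop κ g hg M i _ (fun j => (h.1 j).1) (fun j => (h.1 j).2) h.2
end

section
/- Let n ∈ ℕ^d have pairwise relatively prime entries, κ ∈ ℤ^d, and let g ∈ {1,…,d} be such that n_i is odd for all i ≠ g. For r ∈ {0,1}: LC^{(2n)}_{κ,r} = { ℓ^{(2n)}_{κ,u}(t^{(2n)}_l) : u ∈ {−1,1}^d, l ∈ {0,…,2p[n]−1}, l ≡ r (mod 2) } = { ℓ^{(2n)}_{κ,u}(t^{(2n)}_l) : u ∈ {−1,1}^d with u_g = 1, l ∈ {0,…,4p[n]−1}, l ≡ r (mod 2) }. If moreover κ = 0, then LC^{(2n)}_{0,0} is the union of the sets LD^{(n)}_u over all u ∈ {−1,1}^d with u_g = 1, these sets being pairwise disjoint, and LC^{(2n)}_{0,1} = { ℓ^{(2n)}_{0,1}(t^{(2n)}_l) : l ∈ {1,…,2p[n]−1}, l ≡ 1 (mod 2) }. -/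
/-!
On the curve `ℓ^{(2n)}_{κ,u}` the sample at `t^{(2n)}_l` has coordinates
`u_j cos((l - κ_j)π/(2n_j))`. A sign `u_j = -1` amounts to shifting `l - κ_j` by `2n_j`, and every
integer `a` can be folded, without changing its parity, to some `i ∈ {0,…,2m}` with
`cos(iπ/(2m)) = cos(aπ/(2m))`. Hence `LC^{(2n)}_{κ,r}` is the set of all points
`(cos(a_jπ/(2n_j)))_j` with integers `a_j ≡ κ_j + r (mod 2)` (`mem_LC2R_iff`), and this gives all
inclusions of sampled curves in node sets.

The opposite inclusions come from the Chinese remainder theorem for the pairwise coprime moduli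
`c n_g` and `n_j`, `j ≠ g`, where `c ∈ {2, 4}` (`exists_crt`). With `c = 2` one solves
`l ≡ κ_j + a_j (mod 2n_j)` for all `j` (for `j ≠ g` the modulus `n_j` is odd and the parity is already
right), so that the signs `u` can be adjusted; with `c = 4` the congruence at `g` holds modulo `4n_g`,
so that `u_g = 1`. For `κ = 0` the reflections `l ↦ 4p[n] - l` fix the sample points and halve
the parameter range. If moreover all `a_j` are odd, then `±a_j` runs through both odd classes modulo
`4`, so one can choose signs with `l ≡ ±a_j (mod 4n_j)` for all `j`, and no `u` is needed.

Disjointness of the `LD^{(n)}_u` is a parity argument: equality of the coordinates with index `g`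
forces `l ≡ l' (mod 2)`, whereas `u_j ≠ u'_j` forces `l ≡ ±l' + n_j (mod 2n_j)` with `n_j` odd.
-/

open Real Set

/-- The multivariate Chebyshev–Gauß–Lobatto point z^{(2n)}_i with
z^{(2m)}_i = cos(iπ/(2m)). -/
noncomputable def zv2 {d : ℕ} (n : Fin d → ℕ) (i : Fin d → ℕ) : Fin d → ℝ :=
  fun j => Real.cos ((i j : ℝ) * Real.pi / (2 * (n j : ℝ)))

/-- The node class LC^{(2n)}_{κ,r} = {z^{(2n)}_i : i ∈ I^{(2n)}_{κ,r}}. -/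
noncomputable def LC2R {d : ℕ} (n : Fin d → ℕ) (κ : Fin d → ℤ) (r : ℕ) :
    Set (Fin d → ℝ) :=
  {x | ∃ i ∈ I2R n κ r, x = zv2 n i}

/-- The node set LD^{(n)}_u = {ℓ^{(n)}_{0,u}(t^{(n)}_l) : 0 ≤ l ≤ p[n]}. -/
noncomputable def LD {d : ℕ} (n : Fin d → ℕ) (u : Fin d → ℝ) : Set (Fin d → ℝ) :=
  {x | ∃ l : ℕ, l ≤ Pp n ∧ x = lc1 n 0 u (tn n l)}

lemma cos_congr {m : ℕ} (hm : 0 < m) {a b : ℤ} (h : a ≡ b [ZMOD 4 * m]) :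
    cos ((a : ℝ) * π / (2 * m)) = cos ((b : ℝ) * π / (2 * m)) := by
  obtain ⟨k, hk⟩ := h.dvd
  have hb : b = a + 4 * m * k := by linarith
  have hm' : (m : ℝ) ≠ 0 := by positivity
  rw [hb, ← Real.cos_add_int_mul_two_pi _ k]
  congr 1
  push_cast
  field_simp
  ring

lemma cos_neg_congr {m : ℕ} (hm : 0 < m) {a b : ℤ} (h : a ≡ -b [ZMOD 4 * m]) :
    cos ((a : ℝ) * π / (2 * m)) = cos ((b : ℝ) * π / (2 * m)) := by
  rw [cos_congr hm h, ← Real.cos_neg]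
  congr 1
  push_cast
  ring

lemma neg_cos_shift {m : ℕ} (hm : 0 < m) (a : ℤ) :
    -cos ((a : ℝ) * π / (2 * m)) = cos (((a + 2 * m : ℤ) : ℝ) * π / (2 * m)) := by
  have hm' : (m : ℝ) ≠ 0 := by positivity
  rw [← Real.cos_add_pi]
  congr 1
  push_cast
  field_simp

/-- A congruence modulo `2m` determines `cos(aπ/(2m))` up to sign. -/
lemma exists_sign {m : ℕ} (hm : 0 < m) {a b : ℤ} (h : a ≡ b [ZMOD 2 * m]) :
    ∃ u : ℝ, (u = 1 ∨ u = -1) ∧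
      cos ((a : ℝ) * π / (2 * m)) = u * cos ((b : ℝ) * π / (2 * m)) := by
  obtain ⟨k, hk⟩ := h.dvd
  rcases Int.even_or_odd' k with ⟨q, rfl | rfl⟩
  · refine ⟨1, Or.inl rfl, ?_⟩
    rw [one_mul]
    exact cos_congr hm ((Int.modEq_iff_dvd).2 ⟨q, by rw [hk]; ring⟩)
  · refine ⟨-1, Or.inr rfl, ?_⟩
    rw [neg_one_mul, neg_cos_shift hm]
    exact cos_congr hm ((Int.modEq_iff_dvd).2 ⟨q + 1, by linear_combination hk⟩)

lemma sign_shift {m : ℕ} (hm : 0 < m) (a : ℤ) {u : ℝ} (hu : u = 1 ∨ u = -1) :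
    ∃ b : ℤ, b ≡ a [ZMOD 2] ∧
      u * cos ((a : ℝ) * π / (2 * m)) = cos ((b : ℝ) * π / (2 * m)) := by
  rcases hu with rfl | rfl
  · exact ⟨a, rfl, one_mul _⟩
  · exact ⟨a + 2 * m, (Int.modEq_iff_dvd).2 ⟨-m, by ring⟩, by rw [neg_one_mul, neg_cos_shift hm]⟩

/-- Folding of `a` modulo `4m` by reflection to the fundamental range `{0,…,2m}`. -/
lemma fold {m : ℕ} (hm : 0 < m) (a : ℤ) :
    ∃ i : ℕ, i ≤ 2 * m ∧ (i : ℤ) ≡ a [ZMOD 2] ∧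
      cos ((i : ℝ) * π / (2 * m)) = cos ((a : ℝ) * π / (2 * m)) := by
  have hpos : (0 : ℤ) < 4 * m := by positivity
  have h0 := Int.emod_nonneg a hpos.ne'
  have h1 := Int.emod_lt_of_pos a hpos
  have h2 : a % (4 * m) ≡ a [ZMOD 4 * m] := Int.mod_modEq _ _
  have h3 : a % (4 * m) ≡ a [ZMOD 2] := h2.of_dvd ⟨2 * m, by ring⟩
  generalize a % (4 * (m : ℤ)) = b at h0 h1 h2 h3
  by_cases h : b ≤ 2 * m
  · lift b to ℕ using h0
    refine ⟨b, by omega, h3, ?_⟩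
    exact_mod_cast cos_congr hm h2
  · have h4 : 0 ≤ 4 * (m : ℤ) - b := by omega
    obtain ⟨i, hi⟩ := Int.eq_ofNat_of_zero_le h4
    refine ⟨i, by omega, ?_, ?_⟩
    · have : (i : ℤ) % 2 = a % 2 := by
        have : b % 2 = a % 2 := h3
        omega
      exact this
    · have h5 : (i : ℤ) ≡ -a [ZMOD 4 * m] := by
        obtain ⟨k, hk⟩ := h2.dvd
        exact (Int.modEq_iff_dvd).2 ⟨-k - 1, by rw [← hi]; linear_combination -hk⟩
      exact_mod_cast cos_neg_congr hm h5

lemma mem_LC2R_iff {d : ℕ} {n : Fin d → ℕ} (hn : ∀ j, 0 < n j) (κ : Fin d → ℤ) (r : ℕ)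
    (x : Fin d → ℝ) :
    x ∈ LC2R n κ r ↔ ∃ a : Fin d → ℤ, (∀ j, a j ≡ κ j + r [ZMOD 2]) ∧
      ∀ j, x j = cos ((a j : ℝ) * π / (2 * n j)) := by
  constructor
  · rintro ⟨i, hi, rfl⟩
    exact ⟨fun j => i j, fun j => (hi j).2, fun j => by simp [zv2]⟩
  · rintro ⟨a, ha, hx⟩
    choose i h1 h2 h3 using fun j => fold (hn j) (a j)
    refine ⟨i, fun j => ⟨h1 j, (h2 j).trans (ha j)⟩, ?_⟩
    funext j
    rw [hx, zv2, h3]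

lemma Pp_eq {d : ℕ} (n : Fin d → ℕ) (j : Fin d) : Pp n = n j * Pc n j :=
  (Finset.mul_prod_erase _ _ (Finset.mem_univ j)).symm

lemma lc2_apply {d : ℕ} {n : Fin d → ℕ} (hn : ∀ j, 0 < n j) (κ : Fin d → ℤ) (u : Fin d → ℝ)
    (l : ℕ) (j : Fin d) :
    lc2 n κ u (t2n n l) j = u j * cos (((l - κ j : ℤ) : ℝ) * π / (2 * n j)) := by
  have hP : 0 < Pp n := Finset.prod_pos fun j _ => hn j
  have hj : (n j : ℝ) ≠ 0 := by exact_mod_cast (hn j).ne'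
  have hc : (Pc n j : ℝ) ≠ 0 := by
    rw [Pp_eq n j] at hP
    exact_mod_cast (Nat.pos_of_mul_pos_left hP).ne'
  rw [lc2, t2n, Pp_eq n j]
  congr 2
  push_cast
  field_simp

lemma lc1_apply {d : ℕ} {n : Fin d → ℕ} (hn : ∀ j, 0 < n j) (u : Fin d → ℝ)
    (l : ℕ) (j : Fin d) :
    lc1 n 0 u (tn n l) j = u j * cos (((2 * l : ℤ) : ℝ) * π / (2 * n j)) := by
  have hP : 0 < Pp n := Finset.prod_pos fun j _ => hn j
  have hj : (n j : ℝ) ≠ 0 := by exact_mod_cast (hn j).ne'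
  have hc : (Pc n j : ℝ) ≠ 0 := by
    rw [Pp_eq n j] at hP
    exact_mod_cast (Nat.pos_of_mul_pos_left hP).ne'
  rw [lc1, tn, Pp_eq n j]
  congr 2
  push_cast
  simp
  field_simp

lemma exists_crt {d : ℕ} {n : Fin d → ℕ} (hn : ∀ j, 0 < n j)
    (hcop : ∀ i j, i ≠ j → Nat.Coprime (n i) (n j)) (g : Fin d) {c : ℕ} (hc : 0 < c)
    (hcn : ∀ j, j ≠ g → Nat.Coprime c (n j)) (b : Fin d → ℤ) :
    ∃ l : ℕ, l < c * Pp n ∧ (l : ℤ) ≡ b g [ZMOD c * n g] ∧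
      ∀ j, j ≠ g → (l : ℤ) ≡ b j [ZMOD n j] := by
  classical
  set s : Fin d → ℕ := Function.update n g (c * n g) with hs
  have hsg : s g = c * n g := by simp [hs]
  have hsj : ∀ j, j ≠ g → s j = n j := fun j hj => by simp [hs, hj]
  have hs0 : ∀ i ∈ Finset.univ, s i ≠ 0 := by
    intro i _
    by_cases h : i = g
    · subst h
      rw [hsg]
      exact (Nat.mul_pos hc (hn i)).ne'
    · rw [hsj i h]
      exact (hn i).ne'
  have hpp : Set.Pairwise (↑(Finset.univ : Finset (Fin d))) (Function.onFun Nat.Coprime s) := by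
    intro i _ j _ hij
    change Nat.Coprime (s i) (s j)
    by_cases h : i = g
    · subst h
      rw [hsg, hsj j hij.symm]
      exact Nat.Coprime.mul_left (hcn j hij.symm) (hcop i j hij)
    · by_cases h' : j = g
      · subst h'
        rw [hsg, hsj i h]
        exact Nat.Coprime.mul_right (hcn i h).symm (hcop i j hij)
      · rw [hsj i h, hsj j h']
        exact hcop i j hij
  have hprod : ∏ i, s i = c * Pp n := by
    rw [Pp_eq n g, ← Finset.mul_prod_erase _ _ (Finset.mem_univ g), hsg, Pc, mul_assoc]
    congr 2
    exact Finset.prod_congr rfl fun j hj => hsj j (Finset.ne_of_mem_erase hj)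
  let res : Fin d → ℕ := fun j => (b j % (s j : ℤ)).toNat
  have hres : ∀ j, (res j : ℤ) ≡ b j [ZMOD s j] := by
    intro j
    have h0 : (s j : ℤ) ≠ 0 := by exact_mod_cast hs0 j (Finset.mem_univ j)
    simp only [res]
    rw [Int.toNat_of_nonneg (Int.emod_nonneg _ h0)]
    exact Int.mod_modEq _ _
  let k := Nat.chineseRemainderOfFinset res s Finset.univ hs0 hpp
  have hk : ∀ j, ((k : ℕ) : ℤ) ≡ b j [ZMOD s j] := fun j =>
    ((Int.natCast_modEq_iff).2 (k.2 j (Finset.mem_univ j))).trans (hres j)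
  refine ⟨k, ?_, ?_, fun j hj => ?_⟩
  · rw [← hprod]
    exact Nat.chineseRemainderOfFinset_lt_prod res s hs0 hpp
  · have := hk g
    rw [hsg] at this
    exact_mod_cast this
  · have := hk j
    rwa [hsj j hj] at this

lemma modEq_two_mul {m : ℕ} (hm : Odd m) {a b : ℤ} (h2 : a ≡ b [ZMOD 2]) (h : a ≡ b [ZMOD m]) :
    a ≡ b [ZMOD 2 * m] := by
  refine (Int.modEq_and_modEq_iff_modEq_mul ?_).1 ⟨h2, h⟩
  exact (Nat.coprime_two_left).2 hm

lemma modEq_four_mul {m : ℕ} (hm : Odd m) {a b : ℤ} (h4 : a ≡ b [ZMOD 4]) (h : a ≡ b [ZMOD m]) :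
    a ≡ b [ZMOD 4 * m] := by
  refine (Int.modEq_and_modEq_iff_modEq_mul ?_).1 ⟨h4, h⟩
  have : Nat.Coprime (2 ^ 2) m := Nat.Coprime.pow_left 2 ((Nat.coprime_two_left).2 hm)
  exact this

/-- Any index vector `a` with the parities of `κ + r` is reached by a single `l`, modulo `2n_j` in
every coordinate and modulo `c n_g` in the coordinate `g`, within one period `c p[n]`. -/
lemma exists_param {d : ℕ} {n : Fin d → ℕ} (hn : ∀ j, 0 < n j)
    (hcop : ∀ i j, i ≠ j → Nat.Coprime (n i) (n j)) {g : Fin d} (hg : ∀ j, j ≠ g → Odd (n j))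
    {κ a : Fin d → ℤ} {r : ℕ} (hr : r ≤ 1) (ha : ∀ j, a j ≡ κ j + r [ZMOD 2])
    {c : ℕ} (hc : c = 2 ∨ c = 4) :
    ∃ l : ℕ, l < c * Pp n ∧ l % 2 = r ∧ a g ≡ l - κ g [ZMOD c * n g] ∧
      ∀ j, a j ≡ l - κ j [ZMOD 2 * n j] := by
  have hcn : ∀ j, j ≠ g → Nat.Coprime c (n j) := by
    intro j hj
    have h2 := (Nat.coprime_two_left).2 (hg j hj)
    rcases hc with rfl | rfl
    · exact h2
    · exact Nat.Coprime.pow_left 2 h2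
  have h2c : (2 : ℤ) ∣ c := by rcases hc with rfl | rfl <;> norm_num
  obtain ⟨l, hl, h1, h2⟩ := exists_crt hn hcop g (by omega) hcn fun j => a j + κ j
  have hpar : (l : ℤ) ≡ a g + κ g [ZMOD 2] := h1.of_dvd (h2c.mul_right _)
  have hpar' : (l : ℤ) % 2 = (a g + κ g) % 2 := hpar
  have ha' : ∀ j, a j % 2 = (κ j + r) % 2 := ha
  have hag := ha' g
  refine ⟨l, hl, by omega, ?_, fun j => ?_⟩
  · simpa using (h1.sub_right (κ g)).symm
  · by_cases hj : j = g
    · subst hj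
      have h3 : (l : ℤ) ≡ a j + κ j [ZMOD 2 * n j] := h1.of_dvd (mul_dvd_mul_right h2c _)
      simpa using (h3.sub_right (κ j)).symm
    · have haj := ha' j
      have h3 : (l : ℤ) ≡ a j + κ j [ZMOD 2] := by
        change (l : ℤ) % 2 = (a j + κ j) % 2
        omega
      simpa using ((modEq_two_mul (hg j hj) h3 (h2 j hj)).sub_right (κ j)).symm

lemma lc2_mem {d : ℕ} {n : Fin d → ℕ} (hn : ∀ j, 0 < n j) (κ : Fin d → ℤ) {u : Fin d → ℝ}
    (hu : ∀ j, u j = 1 ∨ u j = -1) (l : ℕ) {r : ℕ} (hl : l % 2 = r) :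
    lc2 n κ u (t2n n l) ∈ LC2R n κ r := by
  rw [mem_LC2R_iff hn]
  choose b h1 h2 using fun j => sign_shift (hn j) (l - κ j) (hu j)
  refine ⟨b, fun j => (h1 j).trans ?_, fun j => by rw [lc2_apply hn, h2]⟩
  change (_ : ℤ) % 2 = _ % 2
  omega

lemma LC2R_subset_two {d : ℕ} {n : Fin d → ℕ} (hn : ∀ j, 0 < n j)
    (hcop : ∀ i j, i ≠ j → Nat.Coprime (n i) (n j)) {g : Fin d} (hg : ∀ j, j ≠ g → Odd (n j))
    {κ : Fin d → ℤ} {r : ℕ} (hr : r ≤ 1) {x : Fin d → ℝ} (hx : x ∈ LC2R n κ r) :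
    ∃ u : Fin d → ℝ, (∀ j, u j = 1 ∨ u j = -1) ∧
      ∃ l : ℕ, l < 2 * Pp n ∧ l % 2 = r ∧ x = lc2 n κ u (t2n n l) := by
  obtain ⟨a, ha, hx⟩ := (mem_LC2R_iff hn _ _ _).1 hx
  obtain ⟨l, hl, hlr, -, h⟩ := exists_param hn hcop hg hr ha (Or.inl rfl)
  choose u h1 h2 using fun j => exists_sign (hn j) (h j)
  exact ⟨u, h1, l, hl, hlr, funext fun j => by rw [hx, h2, lc2_apply hn]⟩

lemma LC2R_subset_four {d : ℕ} {n : Fin d → ℕ} (hn : ∀ j, 0 < n j)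
    (hcop : ∀ i j, i ≠ j → Nat.Coprime (n i) (n j)) {g : Fin d} (hg : ∀ j, j ≠ g → Odd (n j))
    {κ : Fin d → ℤ} {r : ℕ} (hr : r ≤ 1) {x : Fin d → ℝ} (hx : x ∈ LC2R n κ r) :
    ∃ u : Fin d → ℝ, (∀ j, u j = 1 ∨ u j = -1) ∧ u g = 1 ∧
      ∃ l : ℕ, l < 4 * Pp n ∧ l % 2 = r ∧ x = lc2 n κ u (t2n n l) := by
  obtain ⟨a, ha, hx⟩ := (mem_LC2R_iff hn _ _ _).1 hx
  obtain ⟨l, hl, hlr, h4, h⟩ := exists_param hn hcop hg hr ha (Or.inr rfl)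
  have key : ∀ j, ∃ u : ℝ, (u = 1 ∨ u = -1) ∧ (j = g → u = 1) ∧
      cos ((a j : ℝ) * π / (2 * n j)) = u * cos (((l - κ j : ℤ) : ℝ) * π / (2 * n j)) := by
    intro j
    by_cases hj : j = g
    · subst hj
      exact ⟨1, Or.inl rfl, fun _ => rfl, by rw [one_mul]; exact cos_congr (hn j) h4⟩
    · obtain ⟨u, h1, h2⟩ := exists_sign (hn j) (h j)
      exact ⟨u, h1, fun h => absurd h hj, h2⟩
  choose u h1 h2 h3 using key
  exact ⟨u, h1, h2 g rfl, l, hl, hlr, funext fun j => by rw [hx, h3, lc2_apply hn]⟩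

/-- For `κ = 0` the sample points of a Lissajous curve are symmetric about `l = 2p[n]`. -/
lemma lc2_reflect {d : ℕ} {n : Fin d → ℕ} (hn : ∀ j, 0 < n j) (u : Fin d → ℝ) {l : ℕ}
    (hl : l ≤ 4 * Pp n) :
    lc2 n 0 u (t2n n ((4 * Pp n - l : ℕ) : ℤ)) = lc2 n 0 u (t2n n l) := by
  funext j
  rw [lc2_apply hn, lc2_apply hn]
  congr 1
  refine cos_neg_congr (hn j) ((Int.modEq_iff_dvd).2 ⟨-(Pc n j : ℤ), ?_⟩)
  rw [Nat.cast_sub hl, Pp_eq n j]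
  push_cast
  simp
  ring

lemma lc1_eq_lc2 {d : ℕ} {n : Fin d → ℕ} (hn : ∀ j, 0 < n j) (u : Fin d → ℝ) (l : ℕ) :
    lc1 n 0 u (tn n l) = lc2 n 0 u (t2n n ((2 * l : ℕ) : ℤ)) := by
  funext j
  rw [lc1_apply hn, lc2_apply hn]
  simp

lemma LC2R_zero_subset {d : ℕ} {n : Fin d → ℕ} (hn : ∀ j, 0 < n j)
    (hcop : ∀ i j, i ≠ j → Nat.Coprime (n i) (n j)) {g : Fin d} (hg : ∀ j, j ≠ g → Odd (n j))
    {x : Fin d → ℝ} (hx : x ∈ LC2R n 0 0) :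
    ∃ u : Fin d → ℝ, (∀ j, u j = 1 ∨ u j = -1) ∧ u g = 1 ∧ x ∈ LD n u := by
  obtain ⟨u, hu, hug, l, hl, hlr, rfl⟩ := LC2R_subset_four hn hcop hg (by omega) hx
  refine ⟨u, hu, hug, ?_⟩
  by_cases h : l ≤ 2 * Pp n
  · refine ⟨l / 2, by omega, ?_⟩
    rw [lc1_eq_lc2 hn, show 2 * (l / 2) = l by omega]
  · refine ⟨(4 * Pp n - l) / 2, by omega, ?_⟩
    rw [lc1_eq_lc2 hn, show 2 * ((4 * Pp n - l) / 2) = 4 * Pp n - l by omega, lc2_reflect hn _ hl.le]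

lemma LC2R_one_subset {d : ℕ} {n : Fin d → ℕ} (hn : ∀ j, 0 < n j)
    (hcop : ∀ i j, i ≠ j → Nat.Coprime (n i) (n j)) {g : Fin d} (hg : ∀ j, j ≠ g → Odd (n j))
    {x : Fin d → ℝ} (hx : x ∈ LC2R n 0 1) :
    ∃ l : ℕ, 1 ≤ l ∧ l < 2 * Pp n ∧ l % 2 = 1 ∧ x = lc2 n 0 (fun _ => 1) (t2n n l) := by
  obtain ⟨a, ha, hx⟩ := (mem_LC2R_iff hn _ _ _).1 hx
  have ha' : ∀ j, a j % 2 = 1 := fun j => by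
    have h : a j % 2 = (0 + ((1 : ℕ) : ℤ)) % 2 := ha j
    omega
  -- Odd integers agree modulo `4` up to sign.
  have hsgn : ∀ j, ∃ e : ℤ, (e = a j ∨ e = -a j) ∧ a g ≡ e [ZMOD 4] := by
    intro j
    have h1 := ha' j
    have h2 := ha' g
    by_cases h : a g % 4 = a j % 4
    · exact ⟨_, Or.inl rfl, h⟩
    · refine ⟨_, Or.inr rfl, ?_⟩
      change a g % 4 = (-a j) % 4
      omega
  choose e he he4 using hsgn
  obtain ⟨l, hl, h1, h2⟩ := exists_crt hn hcop g (c := 4) (by norm_num)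
    (fun j hj => Nat.Coprime.pow_left 2 ((Nat.coprime_two_left).2 (hg j hj))) (Function.update e g (a g))
  rw [Function.update_self] at h1
  have h14 : (l : ℤ) ≡ a g [ZMOD 4] := h1.of_dvd (Dvd.intro _ rfl)
  have hodd : l % 2 = 1 := by
    have h3 : (l : ℤ) % 4 = a g % 4 := h14
    have h4 := ha' g
    omega
  have hxl : x = lc2 n 0 (fun _ => 1) (t2n n l) := by
    funext j
    rw [hx, lc2_apply hn, one_mul]
    simp only [Pi.zero_apply, sub_zero]
    by_cases hj : j = g
    · subst hj
      exact (cos_congr (hn j) h1).symm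
    · have h3 := h2 j hj
      rw [Function.update_of_ne hj] at h3
      have h5 := modEq_four_mul (hg j hj) (h14.trans (he4 j)) h3
      rcases he j with h | h <;> rw [h] at h5
      · exact (cos_congr (hn j) h5).symm
      · exact (cos_neg_congr (hn j) h5).symm
  by_cases h : l < 2 * Pp n
  · exact ⟨l, by omega, h, hodd, hxl⟩
  · exact ⟨4 * Pp n - l, by omega, by omega, by omega, by rw [lc2_reflect hn _ hl.le, hxl]⟩

/-- Equal cosines at two multiples of `π/m` come from indices `a ≡ ±b (mod 2m)`, hence of equal parity. -/
lemma even_sub_of_cos_eq {m : ℕ} (hm : 0 < m) {a b : ℤ}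
    (h : cos (((2 * a : ℤ) : ℝ) * π / (2 * m)) = cos (((2 * b : ℤ) : ℝ) * π / (2 * m))) :
    a ≡ b [ZMOD 2] := by
  have hm' : (m : ℝ) ≠ 0 := by positivity
  obtain ⟨k, hk⟩ := Real.cos_eq_cos_iff.1 h
  have hpi := Real.pi_ne_zero
  rcases hk with hk | hk
  · have : (b : ℝ) = 2 * (k * m) + a := by
      push_cast at hk
      field_simp at hk
      linarith
    have : b = 2 * (k * m) + a := by exact_mod_cast this
    exact (Int.modEq_iff_dvd).2 ⟨k * m, by rw [this]; ring⟩
  · have : (b : ℝ) = 2 * (k * m) - a := by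
      push_cast at hk
      field_simp at hk
      linarith
    have : b = 2 * (k * m) - a := by exact_mod_cast this
    exact (Int.modEq_iff_dvd).2 ⟨k * m - a, by rw [this]; ring⟩

lemma odd_sub_of_cos_eq_neg {m : ℕ} (hm : Odd m) {a b : ℤ}
    (h : cos (((2 * a : ℤ) : ℝ) * π / (2 * m)) = -cos (((2 * b : ℤ) : ℝ) * π / (2 * m))) :
    a ≡ b + 1 [ZMOD 2] := by
  have h1 := hm.pos
  rw [neg_cos_shift h1, ← mul_add] at h
  obtain ⟨k, rfl⟩ := hm
  refine (even_sub_of_cos_eq h1 h).trans ((Int.modEq_iff_dvd).2 ⟨-k, ?_⟩)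
  push_cast
  ring

lemma LD_disjoint {d : ℕ} {n : Fin d → ℕ} (hn : ∀ j, 0 < n j)
    {g : Fin d} (hg : ∀ j, j ≠ g → Odd (n j)) {u v : Fin d → ℝ}
    (hu : ∀ j, u j = 1 ∨ u j = -1) (hv : ∀ j, v j = 1 ∨ v j = -1)
    (hug : u g = 1) (hvg : v g = 1) (huv : u ≠ v) : Disjoint (LD n u) (LD n v) := by
  rw [Set.disjoint_left]
  rintro x ⟨l, -, rfl⟩ ⟨k, -, h⟩
  obtain ⟨j, hj⟩ := Function.ne_iff.1 huv
  have hjg : j ≠ g := by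
    rintro rfl
    exact hj (hug.trans hvg.symm)
  have h1 := congrFun h g
  have h2 := congrFun h j
  rw [lc1_apply hn, lc1_apply hn] at h1 h2
  rw [hug, hvg, one_mul, one_mul] at h1
  have h3 : (l : ℤ) % 2 = k % 2 := even_sub_of_cos_eq (hn g) h1
  have h4 : (l : ℤ) % 2 = (k + 1) % 2 := by
    refine odd_sub_of_cos_eq_neg (hg j hjg) ?_
    rcases hu j with a | a <;> rcases hv j with b | b <;> rw [a, b] at h2 hj
    · exact absurd rfl hj
    · linarith
    · linarith
    · exact absurd rfl hj
  omega

/-- Theorem 3.2: characterizations of LC^{(2n)}_{κ,r} via the family of Lissajous curves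
ℓ^{(2n)}_{κ,u}, and, for κ = 0, the decomposition of LC^{(2n)}_{0,0} into the pairwise
disjoint sets LD^{(n)}_u with u_g = 1, together with the description of LC^{(2n)}_{0,1}. -/
theorem stmt_15 {d : ℕ} (hd : 0 < d) (n : Fin d → ℕ) (hn : ∀ j, 0 < n j)
    (hcop : ∀ i j, i ≠ j → Nat.Coprime (n i) (n j))
    (κ : Fin d → ℤ) (g : Fin d) (hg : ∀ j, j ≠ g → Odd (n j)) :
    (∀ r : ℕ, r ≤ 1 →
      LC2R n κ r = {x | ∃ u : Fin d → ℝ, (∀ j, u j = 1 ∨ u j = -1) ∧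
        ∃ l : ℕ, l < 2 * Pp n ∧ l % 2 = r ∧ x = lc2 n κ u (t2n n l)} ∧
      LC2R n κ r = {x | ∃ u : Fin d → ℝ, (∀ j, u j = 1 ∨ u j = -1) ∧ u g = 1 ∧
        ∃ l : ℕ, l < 4 * Pp n ∧ l % 2 = r ∧ x = lc2 n κ u (t2n n l)}) ∧
    (LC2R n 0 0 = {x | ∃ u : Fin d → ℝ, (∀ j, u j = 1 ∨ u j = -1) ∧ u g = 1 ∧
      x ∈ LD n u}) ∧
    (∀ u u' : Fin d → ℝ, (∀ j, u j = 1 ∨ u j = -1) → (∀ j, u' j = 1 ∨ u' j = -1) →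
      u g = 1 → u' g = 1 → u ≠ u' → Disjoint (LD n u) (LD n u')) ∧
    (LC2R n 0 1 = {x | ∃ l : ℕ, 1 ≤ l ∧ l < 2 * Pp n ∧ l % 2 = 1 ∧
      x = lc2 n 0 (fun _ => 1) (t2n n l)}) := by
  refine ⟨fun r hr => ⟨Set.Subset.antisymm (fun x hx => LC2R_subset_two hn hcop hg hr hx) ?_,
    Set.Subset.antisymm (fun x hx => LC2R_subset_four hn hcop hg hr hx) ?_⟩,
    Set.Subset.antisymm (fun x hx => LC2R_zero_subset hn hcop hg hx) ?_,
    fun u v hu hv hug hvg huv => LD_disjoint hn hg hu hv hug hvg huv,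
    Set.Subset.antisymm (fun x hx => LC2R_one_subset hn hcop hg hx) ?_⟩
  · rintro x ⟨u, hu, l, -, hl, rfl⟩
    exact lc2_mem hn κ hu l hl
  · rintro x ⟨u, hu, -, l, -, hl, rfl⟩
    exact lc2_mem hn κ hu l hl
  · rintro x ⟨u, hu, -, l, -, rfl⟩
    rw [lc1_eq_lc2 hn]
    exact lc2_mem hn 0 hu (2 * l) (by omega)
  · rintro x ⟨l, -, -, hl, rfl⟩
    exact lc2_mem hn 0 (fun _ => Or.inl rfl) l hl
end

section
/- Let n ∈ ℕ^d have pairwise relatively prime entries, κ ∈ ℤ^d, and γ ∈ ℕ_0^d. If the weighted sum Σ_{i ∈ I^{(2n)}_κ} w^{(2n)}_{κ,i} · χ^{(2n)}_γ(i) is nonzero, then there exists h ∈ ℕ_0^d with γ_i = 2h_i·n_i for all i ∈ {1,…,d} and Σ_{i=1}^d h_i even. Conversely, if such an h exists, then Σ_{i ∈ I^{(2n)}_κ} w^{(2n)}_{κ,i} · χ^{(2n)}_γ(i) = (−1)^{θ_κ(γ)} with θ_κ(γ) = Σ_{i=1}^d h_i·κ_i. -/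
/-!
For fixed `r` the index class `I2R n κ r` is a box, and the weight and `χ_γ` are both products over
the coordinates. Hence the weighted sum over `I2R n κ r` is `1 / (2^(d+1) p[n])` times the product
over `j` of the one-dimensional sums `cosSum (n j) (γ j) (κ j + r)`, which are trapezoidal sums of
`cos (a i)`, `a = γ_j π / (2 n_j)`, over the `i ∈ [0, 2 n_j]` of fixed parity.

* Multiplying a one-dimensional sum by `sin a` turns it into a multiple of `sin (2 n_j a) = 0`, so
  it vanishes unless `sin a = 0`, that is, unless `γ_j = 2 h_j n_j` (`cosSum_eq_zero`).
* If `γ_j = 2 h_j n_j`, every summand is the same sign `(-1)^(h_j s)`, and the weights add up to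
  `2 n_j` (`cosSum_eq`).

Adding the contributions of `r = 0` and `r = 1`, whose index classes are disjoint because `d > 0`,
gives `(-1)^(∑ h_j κ_j) * (1 + (-1)^(∑ h_j)) / 2`, from which both claims are immediate.
-/

open Real Set

/-- The set M(i) = {j : 0 < i_j < 2n_j}. -/
def M2set {d : ℕ} (n : Fin d → ℕ) (i : Fin d → ℕ) : Finset (Fin d) :=
  Finset.univ.filter (fun j => 0 < i j ∧ i j < 2 * n j)

/-- The weight w^{(2n)}_{κ,i} = 2^{#M(i)}/(2^{d+1} p[n]). -/
noncomputable def wt2 {d : ℕ} (n : Fin d → ℕ) (i : Fin d → ℕ) : ℝ :=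
  (2 : ℝ) ^ (M2set n i).card / ((2 : ℝ) ^ (d + 1) * (Pp n : ℝ))

/-- The function χ^{(2n)}_γ(i) = ∏_j cos(γ_j i_j π / (2n_j)). -/
noncomputable def chi2 {d : ℕ} (n : Fin d → ℕ) (γ : Fin d → ℕ) (i : Fin d → ℕ) : ℝ :=
  ∏ j, Real.cos ((γ j : ℝ) * (i j : ℝ) * Real.pi / (2 * (n j : ℝ)))

/-- The one-dimensional trapezoidal sum of `cos (g i π / (2 m))` over the indices `0 ≤ i ≤ 2m` with
`i ≡ s (mod 2)`: interior nodes have weight `2`, the endpoints `0` and `2m` weight `1`. -/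
noncomputable def cosSum (m g : ℕ) (s : ℤ) : ℝ :=
  ∑ i ∈ (Finset.range (2 * m + 1)).filter (fun i : ℕ => (i : ℤ) ≡ s [ZMOD 2]),
    (if 0 < i ∧ i < 2 * m then (2 : ℝ) else 1) * Real.cos ((g : ℝ) * (i : ℝ) * Real.pi / (2 * m))

/-- The trapezoidal weights arise by summing over adjacent pairs `i, i + 1`. -/
lemma cosSum_eq_pairs (m g : ℕ) (hm : 0 < m) (s : ℤ) (f : ℕ → ℝ)
    (hf : ∀ i : ℕ, f i = if (i : ℤ) ≡ s [ZMOD 2] then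
      Real.cos ((g : ℝ) * (i : ℝ) * Real.pi / (2 * m)) else 0) :
    cosSum m g s = ∑ i ∈ Finset.range (2 * m), (f i + f (i + 1)) := by
  have h1 : cosSum m g s = ∑ i ∈ Finset.range (2 * m + 1),
      ((if i < 2 * m then f i else 0) + (if 0 < i then f i else 0)) := by
    rw [cosSum, Finset.sum_filter]
    refine Finset.sum_congr rfl fun i hi => ?_
    have hi' : i < 2 * m + 1 := Finset.mem_range.1 hi
    rw [hf i]
    split_ifs <;> first | (exfalso; omega) | ring
  rw [h1, Finset.sum_add_distrib, Finset.sum_add_distrib, Finset.sum_range_succ,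
    Finset.sum_range_succ' (fun i => if 0 < i then f i else 0)]
  simp only [lt_irrefl, if_false, add_zero, Nat.succ_pos, if_true]
  congr 1
  exact Finset.sum_congr rfl fun i hi => if_pos (Finset.mem_range.1 hi)

/-- With `θ = 2 m a`, multiplying the sum of `cos (a i)` over one parity class by `sin a`
telescopes to a multiple of `sin θ`. -/
lemma sin_mul_pairs (a : ℝ) (s : ℤ) (f : ℕ → ℝ)
    (hf : ∀ i : ℕ, f i = if (i : ℤ) ≡ s [ZMOD 2] then Real.cos (a * i) else 0) (m : ℕ) :
    Real.sin a * ∑ i ∈ Finset.range (2 * m), (f i + f (i + 1)) =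
      Real.sin (a * (2 * m)) * (if s % 2 = 0 then Real.cos a else 1) := by
  induction m with
  | zero => simp
  | succ m ih =>
    have e : 2 * (m + 1) = 2 * m + 1 + 1 := by ring
    rw [e, Finset.sum_range_succ, Finset.sum_range_succ, mul_add, mul_add, ih, hf, hf, hf]
    have e1 : a * (2 * ((m + 1 : ℕ) : ℝ)) = a * (2 * m) + a + a := by push_cast; ring
    have e2 : a * ((2 * m : ℕ) : ℝ) = a * (2 * m) := by push_cast; ring
    have e3 : a * ((2 * m + 1 : ℕ) : ℝ) = a * (2 * m) + a := by push_cast; ring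
    have e4 : a * ((2 * m + 1 + 1 : ℕ) : ℝ) = a * (2 * m) + a + a := by push_cast; ring
    rw [e1, e2, e3, e4]
    have hs := Real.sin_sq_add_cos_sq a
    have c : ∀ k : ℕ, ((k : ℤ) ≡ s [ZMOD 2] ↔ (k : ℤ) % 2 = s % 2) := fun _ => Iff.rfl
    rcases Int.emod_two_eq_zero_or_one s with h | h
    · rw [if_pos ((c _).2 (by omega)), if_neg (mt (c _).1 (by omega)),
        if_pos ((c _).2 (by omega)), if_pos h]
      simp only [Real.sin_add, Real.cos_add]
      linear_combination
        (-Real.sin (a * (2 * m)) * Real.cos a - Real.cos (a * (2 * m)) * Real.sin a) * hs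
    · rw [if_neg (mt (c _).1 (by omega)), if_pos ((c _).2 (by omega)),
        if_neg (mt (c _).1 (by omega)), if_neg (by omega)]
      simp only [Real.sin_add, Real.cos_add]
      linear_combination (-Real.sin (a * (2 * m))) * hs

lemma cosSum_eq_zero (m g : ℕ) (hm : 0 < m) (s : ℤ) (hg : ¬ ∃ h : ℕ, g = 2 * h * m) :
    cosSum m g s = 0 := by
  have hm' : (m : ℝ) ≠ 0 := by positivity
  rw [cosSum_eq_pairs m g hm s _ (fun _ => rfl)]
  have h := sin_mul_pairs ((g : ℝ) * Real.pi / (2 * m)) s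
    (fun i : ℕ => if (i : ℤ) ≡ s [ZMOD 2] then
      Real.cos ((g : ℝ) * (i : ℝ) * Real.pi / (2 * m)) else 0)
    (fun i => by congr 2; ring) m
  have e : (g : ℝ) * Real.pi / (2 * m) * (2 * m) = g * Real.pi := by field_simp
  rw [e, Real.sin_nat_mul_pi, zero_mul] at h
  refine (mul_eq_zero.1 h).resolve_left fun h0 => hg ?_
  obtain ⟨k, hk⟩ := Real.sin_eq_zero_iff.1 h0
  have hk1 : (g : ℝ) = 2 * k * m := by
    have hpi := Real.pi_ne_zero
    field_simp at hk
    linarith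
  have hk2 : (g : ℤ) = 2 * k * m := by exact_mod_cast hk1
  have hk0 : 0 ≤ k := by
    by_contra hneg
    have : k * m < 0 := mul_neg_of_neg_of_pos (by omega) (by omega)
    nlinarith
  lift k to ℕ using hk0
  exact ⟨k, by exact_mod_cast hk2⟩

lemma cosSum_eq (m h : ℕ) (hm : 0 < m) (s : ℤ) :
    cosSum m (2 * h * m) s = 2 * m * (-1 : ℝ) ^ ((h : ℤ) * s) := by
  have hm' : (m : ℝ) ≠ 0 := by positivity
  rw [cosSum_eq_pairs m _ hm s (fun i : ℕ => if (i : ℤ) ≡ s [ZMOD 2] then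
      (-1 : ℝ) ^ ((h : ℤ) * s) else 0)]
  · rw [Finset.sum_congr rfl (g := fun _ => (-1 : ℝ) ^ ((h : ℤ) * s))]
    · simp
    · -- exactly one of `i` and `i + 1` has the parity of `s`
      intro i _
      have c : ∀ k : ℕ, ((k : ℤ) ≡ s [ZMOD 2] ↔ (k : ℤ) % 2 = s % 2) := fun _ => Iff.rfl
      by_cases hi : (i : ℤ) % 2 = s % 2
      · rw [if_pos ((c _).2 hi), if_neg (mt (c _).1 (by omega)), add_zero]
      · rw [if_neg (mt (c _).1 hi), if_pos ((c _).2 (by omega)), zero_add]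
  · intro i
    split_ifs with hi
    · have e : ((2 * h * m : ℕ) : ℝ) * (i : ℝ) * Real.pi / (2 * m) =
          ((h * i : ℕ) : ℝ) * Real.pi := by
        push_cast; field_simp
      rw [e, Real.cos_nat_mul_pi]
      obtain ⟨c, hc⟩ := hi.dvd
      have : (h : ℤ) * s = ((h * i : ℕ) : ℤ) + 2 * (h * c) := by
        push_cast; linear_combination (h : ℤ) * hc
      rw [this, zpow_add₀ (by norm_num), zpow_mul, zpow_natCast]
      simp
    · rfl

/-- `I2R n κ r` as a finite box. -/
def boxR {d : ℕ} (n : Fin d → ℕ) (κ : Fin d → ℤ) (r : ℕ) : Finset (Fin d → ℕ) :=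
  Fintype.piFinset fun j =>
    (Finset.range (2 * n j + 1)).filter (fun i : ℕ => (i : ℤ) ≡ κ j + (r : ℤ) [ZMOD 2])

lemma coe_boxR {d : ℕ} (n : Fin d → ℕ) (κ : Fin d → ℤ) (r : ℕ) :
    (boxR n κ r : Set (Fin d → ℕ)) = I2R n κ r := by
  ext i
  simp [boxR, I2R]

lemma sum_boxR {d : ℕ} (n : Fin d → ℕ) (κ : Fin d → ℤ) (γ : Fin d → ℕ) (r : ℕ) :
    ∑ i ∈ boxR n κ r, wt2 n i * chi2 n γ i =
      (∏ j, cosSum (n j) (γ j) (κ j + r)) / ((2 : ℝ) ^ (d + 1) * (Pp n : ℝ)) := by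
  simp only [cosSum]
  rw [Finset.prod_univ_sum, Finset.sum_div]
  refine Finset.sum_congr rfl fun i _ => ?_
  rw [Finset.prod_mul_distrib, wt2, chi2, M2set, Finset.prod_ite, Finset.prod_const,
    Finset.prod_const_one]
  ring

lemma finsum_I2 {d : ℕ} (hd : 0 < d) (n : Fin d → ℕ) (κ : Fin d → ℤ) (γ : Fin d → ℕ) :
    ∑ᶠ i ∈ I2 n κ, wt2 n i * chi2 n γ i =
      (∏ j, cosSum (n j) (γ j) (κ j) + ∏ j, cosSum (n j) (γ j) (κ j + 1)) /
        ((2 : ℝ) ^ (d + 1) * (Pp n : ℝ)) := by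
  have hdisj : Disjoint (boxR n κ 0 : Set (Fin d → ℕ)) (boxR n κ 1) := by
    rw [coe_boxR, coe_boxR, Set.disjoint_left]
    intro i h0 h1
    have a := (h0 ⟨0, hd⟩).2
    have b := (h1 ⟨0, hd⟩).2
    simp only [Int.ModEq] at a b
    push_cast at a b
    omega
  rw [I2, ← coe_boxR, ← coe_boxR, finsum_mem_union hdisj (Finset.finite_toSet _)
    (Finset.finite_toSet _), finsum_mem_coe_finset, finsum_mem_coe_finset, sum_boxR, sum_boxR,
    add_div]
  simp

lemma prod_cosSum {d : ℕ} (n : Fin d → ℕ) (hn : ∀ j, 0 < n j) (h : Fin d → ℕ) (s : Fin d → ℤ) :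
    ∏ j, cosSum (n j) (2 * h j * n j) (s j) =
      2 ^ d * (Pp n : ℝ) * (-1 : ℝ) ^ (∑ j, (h j : ℤ) * s j) := by
  have hz : ∀ t : Finset (Fin d),
      (-1 : ℝ) ^ (∑ j ∈ t, (h j : ℤ) * s j) = ∏ j ∈ t, (-1 : ℝ) ^ ((h j : ℤ) * s j) := by
    intro t
    induction t using Finset.cons_induction with
    | empty => simp
    | cons a t ha ih =>
      rw [Finset.sum_cons, Finset.prod_cons, zpow_add₀ (by norm_num), ih]
  rw [hz, Finset.prod_congr rfl fun j _ => cosSum_eq (n j) (h j) (hn j) (s j),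
    Finset.prod_mul_distrib, Finset.prod_mul_distrib]
  simp [Pp]

lemma finsum_I2_eq {d : ℕ} (hd : 0 < d) (n : Fin d → ℕ) (hn : ∀ j, 0 < n j) (κ : Fin d → ℤ)
    (γ h : Fin d → ℕ) (hγ : ∀ j, γ j = 2 * h j * n j) :
    ∑ᶠ i ∈ I2 n κ, wt2 n i * chi2 n γ i =
      (-1 : ℝ) ^ (∑ j, (h j : ℤ) * κ j) * (1 + (-1) ^ (∑ j, h j)) / 2 := by
  obtain rfl : γ = fun j => 2 * h j * n j := funext hγ
  have hP : (Pp n : ℝ) ≠ 0 := by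
    exact_mod_cast (Finset.prod_pos fun j _ => hn j).ne'
  have e : ∑ j, (h j : ℤ) * (κ j + 1) = ∑ j, (h j : ℤ) * κ j + ((∑ j, h j : ℕ) : ℤ) := by
    push_cast
    rw [← Finset.sum_add_distrib]
    exact Finset.sum_congr rfl fun j _ => by ring
  rw [finsum_I2 hd, prod_cosSum n hn h, prod_cosSum n hn h (fun j => κ j + 1), e,
    zpow_add₀ (by norm_num), zpow_natCast]
  field_simp
  ring

/-- Proposition 3.4: the weighted sum of χ^{(2n)}_γ over I^{(2n)}_κ is nonzero only if
γ_i = 2h_i n_i with Σ h_i even, in which case the sum equals (−1)^{Σ h_i κ_i}. -/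
theorem stmt_17 {d : ℕ} (hd : 0 < d) (n : Fin d → ℕ) (hn : ∀ j, 0 < n j)
    (hcop : ∀ i j, i ≠ j → Nat.Coprime (n i) (n j))
    (κ : Fin d → ℤ) (γ : Fin d → ℕ) :
    ((∑ᶠ i ∈ I2 n κ, wt2 n i * chi2 n γ i) ≠ 0 →
      ∃ h : Fin d → ℕ, (∀ j, γ j = 2 * h j * n j) ∧ Even (∑ j, h j)) ∧
    (∀ h : Fin d → ℕ, (∀ j, γ j = 2 * h j * n j) → Even (∑ j, h j) →
      ∑ᶠ i ∈ I2 n κ, wt2 n i * chi2 n γ i = (-1 : ℝ) ^ (∑ j, (h j : ℤ) * κ j)) := by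
  constructor
  · intro hne
    have hex : ∀ j, ∃ h : ℕ, γ j = 2 * h * n j := by
      by_contra hcon
      push Not at hcon
      obtain ⟨j, hj⟩ := hcon
      have hj' : ¬ ∃ h : ℕ, γ j = 2 * h * n j := fun ⟨h, hh⟩ => hj h hh
      apply hne
      rw [finsum_I2 hd,
        Finset.prod_eq_zero (Finset.mem_univ j) (cosSum_eq_zero _ _ (hn j) _ hj'),
        Finset.prod_eq_zero (Finset.mem_univ j) (cosSum_eq_zero _ _ (hn j) _ hj')]
      simp
    choose h hh using hex
    refine ⟨h, hh, ?_⟩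
    by_contra hodd
    apply hne
    rw [finsum_I2_eq hd n hn κ γ h hh, (Nat.not_even_iff_odd.1 hodd).neg_one_pow]
    simp
  · intro h hh heven
    rw [finsum_I2_eq hd n hn κ γ h hh, heven.neg_one_pow]
    ring
end
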